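/- arXiv:math/0209133 — 2 statements merged into one kernel-verified Lean document; each statement's English description precedes it below -/
import Mathlib

section
/- If l is a good Lyndon word and g is any good word with |g| = |l| (the same degree in Q), then l ≤ g lexicographically; in particular, any two good Lyndon words of the same degree are equal, and the good Lyndon word of a given degree is the lexicographically smallest good word of that degree. -/
open scoped BigOperators

noncomputable section

/-- The field `ℚ(q)` of rational functions over `ℚ`. -/
abbrev K : Type := RatFunc ℚ

/-- The indeterminate `q`. -/
abbrev qq : K := RatFunc.X

/-- Words on the alphabet `{w_1, …, w_r}` (the free monoid `M`). -/
abbrev Word (r : ℕ) := List (Fin r)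

/-- The space `F` with basis the words, as finitely supported families of coefficients. -/
abbrev FA (r : ℕ) := Word r →₀ K

variable {r : ℕ}

/-- `(|w|, |x|)` : the symmetric bilinear form evaluated on the degrees of two words,
where `p i j = (α_i, α_j)` is the form on simple roots. -/
def pairW (p : Fin r → Fin r → ℤ) (w x : Word r) : ℤ :=
  (w.map fun i => (x.map fun j => p i j).sum).sum

/-- Auxiliary q-shuffle on *reversed* words:
`shAux p w x` is the q-shuffle of `w.reverse` and `x.reverse`; it implements the recursion
`(w·a) * (x·b) = (w * (x·b))·a + q^{-(|w·a|,|b|)} ((w·a) * x)·b`, `w[] * x = x * w[] = x`. -/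
def shAux (p : Fin r → Fin r → ℤ) : Word r → Word r → FA r
  | [], x => Finsupp.single x.reverse 1
  | w, [] => Finsupp.single w.reverse 1
  | a :: w, b :: x =>
      Finsupp.mapDomain (fun u => u ++ [a]) (shAux p w (b :: x))
      + (qq ^ (-(pairW p (a :: w) [b]))) •
          Finsupp.mapDomain (fun u => u ++ [b]) (shAux p (a :: w) x)
  termination_by w x => w.length + x.length
  decreasing_by all_goals (first | (simp only [List.length_cons]; omega) | omega)

/-- The q-shuffle product `*` on `F`, extended bilinearly from words. -/
def shuffle (p : Fin r → Fin r → ℤ) (f g : FA r) : FA r :=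
  f.sum fun w c => g.sum fun x d => (c * d) • shAux p w.reverse x.reverse

/-- Membership in `𝒰`, the `ℚ(q)`-subalgebra of `(F, *)` generated by the letters `w_i`. -/
inductive InU (p : Fin r → Fin r → ℤ) : FA r → Prop
  | letter (i : Fin r) : InU p (Finsupp.single [i] 1)
  | one : InU p (Finsupp.single ([] : Word r) 1)
  | add : ∀ {f g : FA r}, InU p f → InU p g → InU p (f + g)
  | smul : ∀ (c : K) {f : FA r}, InU p f → InU p (c • f)
  | mul : ∀ {f g : FA r}, InU p f → InU p g → InU p (shuffle p f g)

/-- The degree of a word in `Q⁺`, recorded as the multiplicity of each simple root. -/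
def deg (w : Word r) : Fin r → ℕ := fun i => w.count i

/-- `f` is homogeneous of degree `ν`. -/
def Homog (f : FA r) (ν : Fin r → ℕ) : Prop := ∀ w ∈ f.support, deg w = ν

/-- Lexicographic order on words (a proper left factor is smaller than the word). -/
def wlt (w x : Word r) : Prop := List.Lex (· < ·) w x

def wle (w x : Word r) : Prop := wlt w x ∨ w = x

/-- `g` is the lexicographically largest word occurring (with nonzero coefficient) in `f`. -/
def IsMaxWord (f : FA r) (g : Word r) : Prop :=
  f g ≠ 0 ∧ ∀ w ∈ f.support, wle w g

/-- Good words: words of the form `max(u)` for a nonzero homogeneous `u ∈ 𝒰`. -/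
def IsGood (p : Fin r → Fin r → ℤ) (g : Word r) : Prop :=
  ∃ u : FA r, InU p u ∧ (∃ ν, Homog u ν) ∧ IsMaxWord u g

/-- Lyndon words: nonempty words smaller than all their proper nonempty right factors. -/
def IsLyndon (l : Word r) : Prop :=
  l ≠ [] ∧ ∀ u v : Word r, l = u ++ v → u ≠ [] → v ≠ [] → wlt l v

/-- The data of the Cartan matrix `[a_{ij}]` of a finite-dimensional complex simple
Lie algebra of rank `r`: an integral matrix with `2` on the diagonal and nonpositive
off-diagonal entries, symmetrizable by `d_i ∈ {1,2,3}`, whose symmetrization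
`(α_i, α_j) = d_i a_{ij}` is positive definite, and which is indecomposable. -/
structure CartanData (r : ℕ) where
  a : Fin r → Fin r → ℤ
  d : Fin r → ℤ
  diag : ∀ i, a i i = 2
  offdiag : ∀ i j, i ≠ j → a i j ≤ 0
  dval : ∀ i, d i = 1 ∨ d i = 2 ∨ d i = 3
  dsymm : ∀ i j, d i * a i j = d j * a j i
  posdef : ∀ v : Fin r → ℚ, v ≠ 0 → 0 < ∑ i, ∑ j, v i * v j * ((d i * a i j : ℤ) : ℚ)
  indec : ∀ s : Finset (Fin r), s.Nonempty → s ≠ Finset.univ →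
    ∃ i ∈ s, ∃ j, j ∉ s ∧ a i j ≠ 0

/-- The symmetric bilinear form `(α_i, α_j) = d_i a_{ij}` on simple roots. -/
def CartanData.p (C : CartanData r) : Fin r → Fin r → ℤ := fun i j => C.d i * C.a i j


section Aux

/-- Real-valued functions on words. -/
abbrev Fn (r : ℕ) := Word r → ℝ

/-- Cartan data together with a real number `q > 1`. -/
structure Dat (r : ℕ) where
  C : CartanData r
  q : ℝ
  hq : 1 < q

namespace Dat

variable (D : Dat r)

def p (i j : Fin r) : ℤ := D.C.d i * D.C.a i j

lemma p_symm (i j : Fin r) : D.p i j = D.p j i := D.C.dsymm i j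

lemma q_pos : 0 < D.q := lt_trans one_pos D.hq

lemma q_ne : D.q ≠ 0 := D.q_pos.ne'

def pr (c : Fin r) (s : Word r) : ℤ := (s.map (D.p c)).sum

@[simp] lemma pr_nil (c : Fin r) : D.pr c [] = 0 := by simp [pr]
@[simp] lemma pr_cons (c d : Fin r) (s : Word r) : D.pr c (d :: s) = D.p c d + D.pr c s := by
  simp [pr]
@[simp] lemma pr_append (c : Fin r) (s t : Word r) : D.pr c (s ++ t) = D.pr c s + D.pr c t := by
  simp [pr]

/-- twisting operator -/
def kt (c : Fin r) : Fn r →ₗ[ℝ] Fn r where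
  toFun f := fun s => D.q ^ (-(D.pr c s)) * f s
  map_add' f g := by ext s; simp [mul_add]
  map_smul' a f := by ext s; simp; ring

lemma kt_apply (c : Fin r) (f : Fn r) (s : Word r) :
    D.kt c f s = D.q ^ (-(D.pr c s)) * f s := rfl

end Dat

/-- delete the first letter -/
def dl (c : Fin r) : Fn r →ₗ[ℝ] Fn r where
  toFun f := fun s => f (c :: s)
  map_add' f g := by ext s; simp
  map_smul' a f := by ext s; simp

/-- delete the last letter -/
def dr (c : Fin r) : Fn r →ₗ[ℝ] Fn r where
  toFun f := fun s => f (s ++ [c])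
  map_add' f g := by ext s; simp
  map_smul' a f := by ext s; simp

lemma dl_apply (c : Fin r) (f : Fn r) (s : Word r) : dl c f s = f (c :: s) := rfl
lemma dr_apply (c : Fin r) (f : Fn r) (s : Word r) : dr c f s = f (s ++ [c]) := rfl

lemma dl_dr (c d : Fin r) (f : Fn r) : dl c (dr d f) = dr d (dl c f) := by
  ext s; simp [dl_apply, dr_apply]

/-- indicator of a word -/
def dlt (w : Word r) : Fn r := fun s => if s = w then 1 else 0

lemma dl_dlt_nil (c : Fin r) : dl c (dlt ([] : Word r)) = 0 := by
  ext s; simp [dl_apply, dlt]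

lemma dl_dlt_cons (c d : Fin r) (w : Word r) :
    dl c (dlt (d :: w)) = if c = d then dlt w else 0 := by
  ext s
  by_cases h : c = d <;> simp [dl_apply, dlt, h]

lemma dr_dlt_nil (c : Fin r) : dr c (dlt ([] : Word r)) = 0 := by
  ext s; simp [dr_apply, dlt]

lemma dr_dlt_snoc (c d : Fin r) (w : Word r) :
    dr c (dlt (w ++ [d])) = if c = d then dlt w else 0 := by
  ext s
  by_cases h : c = d
  · subst h; simp [dr_apply, dlt]
  · simp [dr_apply, dlt, h]

lemma fn_ext_dl {f g : Fn r} (h0 : f [] = g []) (h : ∀ c, dl c f = dl c g) : f = g := by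
  ext s
  cases s with
  | nil => exact h0
  | cons c s => exact congrFun (h c) s

namespace Dat

variable (D : Dat r)

def mulA : Word r → Fn r → Fn r → ℝ
  | [], f, g => f [] * g []
  | c :: s, f, g => mulA s f (dl c g) + mulA s (dl c f) (D.kt c g)

def mul (f g : Fn r) : Fn r := fun s => D.mulA s f g

lemma mul_nil (f g : Fn r) : D.mul f g [] = f [] * g [] := rfl

lemma dl_mul (c : Fin r) (f g : Fn r) :
    dl c (D.mul f g) = D.mul f (dl c g) + D.mul (dl c f) (D.kt c g) := by
  ext s; rfl

lemma mul_cons (f g : Fn r) (c : Fin r) (s : Word r) :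
    D.mul f g (c :: s) = D.mul f (dl c g) s + D.mul (dl c f) (D.kt c g) s := rfl

lemma mul_add (f g h : Fn r) : D.mul f (g + h) = D.mul f g + D.mul f h := by
  ext s
  induction s generalizing f g h with
  | nil => simp [mul_nil]; ring
  | cons c s ih => simp only [mul_cons, map_add, ih, Pi.add_apply]; ring

lemma add_mul (f g h : Fn r) : D.mul (f + g) h = D.mul f h + D.mul g h := by
  ext s
  induction s generalizing f g h with
  | nil => simp [mul_nil]; ring
  | cons c s ih => simp only [mul_cons, map_add, ih, Pi.add_apply]; ring

lemma smul_mul (a : ℝ) (f g : Fn r) : D.mul (a • f) g = a • D.mul f g := by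
  ext s
  induction s generalizing f g with
  | nil => simp [mul_nil]; ring
  | cons c s ih => simp only [mul_cons, map_smul, ih, Pi.smul_apply, smul_eq_mul]; ring

lemma mul_smul (a : ℝ) (f g : Fn r) : D.mul f (a • g) = a • D.mul f g := by
  ext s
  induction s generalizing f g with
  | nil => simp [mul_nil]; ring
  | cons c s ih => simp only [mul_cons, map_smul, ih, Pi.smul_apply, smul_eq_mul]; ring

/-- bilinear version -/
def mulL : Fn r →ₗ[ℝ] Fn r →ₗ[ℝ] Fn r :=
  LinearMap.mk₂ ℝ D.mul D.add_mul D.smul_mul D.mul_add D.mul_smul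

lemma mulL_apply (f g : Fn r) : D.mulL f g = D.mul f g := rfl

lemma zero_mul (f : Fn r) : D.mul 0 f = 0 := by
  rw [← mulL_apply]; simp
lemma mul_zero (f : Fn r) : D.mul f 0 = 0 := by
  rw [← mulL_apply]; simp

lemma kt_dl (c d : Fin r) (f : Fn r) :
    dl d (D.kt c f) = D.q ^ (-(D.p c d)) • D.kt c (dl d f) := by
  ext s
  simp only [dl_apply, kt_apply, pr_cons, Pi.smul_apply, smul_eq_mul, neg_add]
  rw [zpow_add₀ D.q_ne]; ring

lemma kt_dr (c d : Fin r) (f : Fn r) :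
    dr d (D.kt c f) = D.q ^ (-(D.p c d)) • D.kt c (dr d f) := by
  ext s
  simp only [dr_apply, kt_apply, pr_append, pr_cons, pr_nil, Pi.smul_apply, smul_eq_mul, neg_add,
    add_zero]
  rw [zpow_add₀ D.q_ne]; ring

lemma kt_kt (c d : Fin r) (f : Fn r) : D.kt c (D.kt d f) = D.kt d (D.kt c f) := by
  ext s; simp only [kt_apply]; ring

lemma kt_mul (c : Fin r) (f g : Fn r) : D.kt c (D.mul f g) = D.mul (D.kt c f) (D.kt c g) := by
  ext s
  induction s generalizing f g with
  | nil => simp [mul_nil, kt_apply]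
  | cons d s ih =>
    have h1 := ih f (dl d g)
    have h2 := ih (dl d f) (D.kt d g)
    simp only [kt_apply] at h1 h2
    rw [kt_apply, mul_cons, mul_cons, kt_dl, kt_dl, mul_smul, smul_mul, kt_kt D d c]
    simp only [pr_cons, neg_add, Pi.smul_apply, smul_eq_mul]
    rw [zpow_add₀ D.q_ne, ← h1, ← h2]; ring

lemma mul_assoc (f g h : Fn r) : D.mul (D.mul f g) h = D.mul f (D.mul g h) := by
  ext s
  induction s generalizing f g h with
  | nil => simp [mul_nil]; ring
  | cons d s ih =>
    simp only [mul_cons, dl_mul, add_mul, mul_add, kt_mul, Pi.add_apply, ih]; ring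

lemma one_mul (g : Fn r) : D.mul (dlt []) g = g := by
  ext s
  induction s generalizing g with
  | nil => simp [mul_nil, dlt]
  | cons d s ih => rw [mul_cons, dl_dlt_nil, zero_mul, ih]; simp [dl_apply]

lemma mul_one (g : Fn r) : D.mul g (dlt []) = g := by
  have hk : ∀ c, D.kt c (dlt ([] : Word r)) = dlt [] := by
    intro c; ext s
    by_cases h : s = [] <;> simp [kt_apply, dlt, h]
  ext s
  induction s generalizing g with
  | nil => simp [mul_nil, dlt]
  | cons d s ih => rw [mul_cons, dl_dlt_nil, mul_zero, hk, ih]; simp [dl_apply]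

lemma dr_mul (c : Fin r) (f g : Fn r) :
    dr c (D.mul f g) = D.mul (dr c f) g + D.mul (D.kt c f) (dr c g) := by
  ext s
  induction s generalizing f g with
  | nil =>
    simp [dr_apply, mul_cons, mul_nil, dl_apply, kt_apply]; ring
  | cons d s ih =>
    have h1 := ih f (dl d g)
    have h2 := ih (dl d f) (D.kt d g)
    simp only [dr_apply, Pi.add_apply] at h1 h2
    simp only [dr_apply, List.cons_append, mul_cons, Pi.add_apply]
    rw [h1, h2]
    simp only [kt_dl, kt_dr, dl_dr, mul_smul, smul_mul, Pi.smul_apply, D.p_symm d c]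
    ring

end Dat


section Words

set_option linter.unusedSectionVars false

variable {α : Type*} [LinearOrder α]

inductive Shuf : List α → List α → List α → Prop
  | nil : Shuf [] [] []
  | left (c : α) {a b s : List α} : Shuf a b s → Shuf (c :: a) b (c :: s)
  | right (c : α) {a b s : List α} : Shuf a b s → Shuf a (c :: b) (c :: s)

namespace Shuf

lemma symm {a b s : List α} (h : Shuf a b s) : Shuf b a s := by
  induction h with
  | nil => exact .nil
  | left c _ ih => exact .right c ih
  | right c _ ih => exact .left c ih

lemma nil_left (b : List α) : Shuf [] b b := by
  induction b with
  | nil => exact .nil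
  | cons c b ih => exact .right c ih

lemma nil_right (a : List α) : Shuf a [] a := (nil_left a).symm

lemma append {a b s a' b' s' : List α} (h : Shuf a b s) (h' : Shuf a' b' s') :
    Shuf (a ++ a') (b ++ b') (s ++ s') := by
  induction h with
  | nil => exact h'
  | left c _ ih => exact .left c ih
  | right c _ ih => exact .right c ih

lemma app (a b : List α) : Shuf a b (a ++ b) := by
  simpa using (nil_right a).append (nil_left b)

lemma length {a b s : List α} (h : Shuf a b s) : s.length = a.length + b.length := by
  induction h with
  | nil => rfl
  | left c _ ih => simp [ih]; omega
  | right c _ ih => simp [ih]; omega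

lemma count {a b s : List α} (h : Shuf a b s) (c : α) : s.count c = a.count c + b.count c := by
  induction h with
  | nil => rfl
  | left d _ ih => simp only [List.count_cons, ih]; omega
  | right d _ ih => simp only [List.count_cons, ih]; omega

lemma eq_of_nil {b s : List α} (h : Shuf [] b s) : s = b := by
  generalize ha : ([] : List α) = a at h
  induction h with
  | nil => rfl
  | left c _ _ => cases ha
  | right c _ ih => rw [ih ha]

/-- split after the prefix `p` of the first word is consumed -/
lemma split {p v x w : List α} (h : Shuf (p ++ v) x w) :
    ∃ x1 x2 s w3, x = x1 ++ x2 ∧ w = s ++ w3 ∧ Shuf p x1 s ∧ Shuf v x2 w3 := by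
  generalize ha : p ++ v = a at h
  induction h generalizing p with
  | nil =>
    obtain ⟨rfl, rfl⟩ := List.append_eq_nil_iff.1 ha
    exact ⟨[], [], [], [], rfl, rfl, .nil, .nil⟩
  | @left c a b s h ih =>
    cases p with
    | nil =>
      simp only [List.nil_append] at ha
      subst ha
      exact ⟨[], b, [], c :: s, rfl, rfl, .nil, .left c h⟩
    | cons d p =>
      simp only [List.cons_append, List.cons.injEq] at ha
      obtain ⟨rfl, ha⟩ := ha
      obtain ⟨x1, x2, t, w3, rfl, rfl, h1, h2⟩ := ih ha
      exact ⟨x1, x2, d :: t, w3, rfl, rfl, .left d h1, h2⟩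
  | @right c a b s h ih =>
    obtain ⟨x1, x2, t, w3, rfl, rfl, h1, h2⟩ := ih ha
    exact ⟨c :: x1, x2, c :: t, w3, rfl, rfl, .right c h1, h2⟩

end Shuf

/-- strictly smaller at some position -/
inductive LL : List α → List α → Prop
  | head {a b : α} (x y : List α) : a < b → LL (a :: x) (b :: y)
  | tail (a : α) {x y : List α} : LL x y → LL (a :: x) (a :: y)

lemma LL.append_lt {x y : List α} (h : LL x y) (u v : List α) : x ++ u < y ++ v := by
  induction h with
  | head x y h => exact List.Lex.rel h
  | tail a _ ih => exact List.Lex.cons ih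

lemma LL.lt {x y : List α} (h : LL x y) : x < y := by simpa using h.append_lt [] []

lemma lcons_iff {a b : α} {x y : List α} :
    a :: x ≤ b :: y ↔ a < b ∨ a = b ∧ x ≤ y := by
  rw [le_iff_lt_or_eq, le_iff_lt_or_eq, List.cons_lt_cons_iff, List.cons.injEq]
  tauto

lemma lnil_le (x : List α) : [] ≤ x := by
  cases x with
  | nil => exact le_rfl
  | cons a x => exact le_of_lt List.Lex.nil

lemma LL_or_initial {x y : List α} (h : x ≤ y) : LL x y ∨ x <+: y := by
  induction x generalizing y with
  | nil => exact .inr ⟨_, rfl⟩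
  | cons a x ih =>
    cases y with
    | nil => exact absurd h (not_le.2 List.Lex.nil)
    | cons b y =>
      rcases lcons_iff.1 h with h1 | ⟨rfl, h1⟩
      · exact .inl (.head _ _ h1)
      · rcases ih h1 with h | h
        · exact .inl (.tail _ h)
        · exact .inr (by simpa using h)

lemma LL.left_append {x1 x2 v : List α} (h : LL (x1 ++ x2) v) : LL x1 v ∨ x1 <+: v := by
  induction x1 generalizing v with
  | nil => exact .inr ⟨_, rfl⟩
  | cons a x1 ih =>
    cases h with
    | head _ _ h => exact .inl (.head _ _ h)
    | tail _ h =>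
      rcases ih h with h | h
      · exact .inl (.tail _ h)
      · exact .inr (by simpa using h)

lemma append_le_append_left' (p : List α) {x y : List α} (h : x ≤ y) : p ++ x ≤ p ++ y := by
  induction p with
  | nil => exact h
  | cons a p ih => exact lcons_iff.2 (.inr ⟨rfl, ih⟩)

lemma le_of_append_le_append_left (p : List α) {x y : List α} (h : p ++ x ≤ p ++ y) : x ≤ y := by
  induction p with
  | nil => exact h
  | cons a p ih =>
    rcases lcons_iff.1 h with h | ⟨_, h⟩
    · exact absurd h (lt_irrefl _)
    · exact ih h

lemma Shuf.repl {a b s b' : List α} (h : Shuf a b s) (hb : LL b b') :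
    ∃ s', Shuf a b' s' ∧ LL s s' := by
  induction h generalizing b' with
  | nil => cases hb
  | left c _ ih =>
    obtain ⟨s', h1, h2⟩ := ih hb
    exact ⟨_, .left c h1, .tail c h2⟩
  | right c _ ih =>
    cases hb with
    | head _ y h => exact ⟨_, .right _ (Shuf.app _ y), .head _ _ h⟩
    | tail _ h =>
      obtain ⟨s', h1, h2⟩ := ih h
      exact ⟨_, .right c h1, .tail c h2⟩

lemma Shuf.repl_le {a b s b' : List α} (h : Shuf a b s) (hb : b ≤ b')
    (hl : b.length = b'.length) : ∃ s', Shuf a b' s' ∧ s ≤ s' := by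
  rcases LL_or_initial hb with h1 | h1
  · obtain ⟨s', h2, h3⟩ := h.repl h1
    exact ⟨s', h2, h3.lt.le⟩
  · rw [← h1.eq_of_length hl]; exact ⟨s, h, le_rfl⟩

lemma Shuf.exchange (n : ℕ) : ∀ {p v x w : List α}, x.length = n → x ≤ v → Shuf (p ++ v) x w →
    ∃ w2, Shuf v (p ++ x) w2 ∧ w ≤ w2 := by
  induction n using Nat.strong_induction_on with
  | _ n ih =>
  intro p v x w hn hxv h
  obtain ⟨x1, x2, s, w3, rfl, rfl, h1, h2⟩ := h.split
  by_cases hx1 : x1 = []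
  · subst hx1
    obtain rfl := h1.symm.eq_of_nil
    exact ⟨s ++ w3, by simpa using (Shuf.nil_left s).append h2, le_rfl⟩
  have hd : LL x1 v ∨ x1 <+: v := by
    rcases LL_or_initial hxv with h | h
    · exact h.left_append
    · exact .inr ((List.prefix_append _ _).trans h)
  rcases hd with hd | ⟨v', rfl⟩
  · obtain ⟨s', h3, h4⟩ := h1.repl hd
    refine ⟨s' ++ (x1 ++ x2), ?_, (h4.append_lt _ _).le⟩
    simpa using h3.symm.append (Shuf.nil_left (x1 ++ x2))
  · have hlt : x2.length < n := by
      have := List.length_pos_of_ne_nil hx1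
      simp at hn; omega
    obtain ⟨w2, h3, h4⟩ := ih _ hlt rfl (le_of_append_le_append_left _ hxv) h2
    exact ⟨s ++ w2, h1.symm.append h3, append_le_append_left' _ h4⟩

lemma shuf_suffix_le {l : List α} (hl : ∀ u v : List α, l = u ++ v → v ≠ [] → l ≤ v)
    (t : List α) : ∀ (h w : List α), l = h ++ t → Shuf t l w → w ≤ t ++ l := by
  induction t with
  | nil => intro h w _ hw; rw [hw.eq_of_nil]; rfl
  | cons c t ih =>
    intro h w hlt hw
    have hIH := fun w => ih (h ++ [c]) w (by simp [hlt])
    have hle := hl h (c :: t) hlt (by simp)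
    generalize hl' : l = l' at hw
    cases hw with
    | left _ hw =>
      subst hl'
      exact lcons_iff.2 (.inr ⟨rfl, hIH _ hw⟩)
    | @right c' _ b s hw =>
      rw [hl'] at hle
      rcases lcons_iff.1 hle with h1 | ⟨rfl, h1⟩
      · exact lcons_iff.2 (.inl h1)
      · obtain ⟨w2, h3, h4⟩ := Shuf.exchange b.length (p := [c']) rfl h1 hw
        rw [hl'] at hIH
        exact lcons_iff.2 (.inr ⟨rfl, h4.trans (hIH _ h3)⟩)

lemma le_take_of_lt {w l : List α} (h : w ≤ l) (hn : w.length ≤ l.length) :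
    w ≤ l.take w.length := by
  induction w generalizing l with
  | nil => exact lnil_le _
  | cons a w ih =>
    cases l with
    | nil => simp at hn
    | cons b l =>
      simp only [List.length_cons, List.take_succ_cons]
      rcases lcons_iff.1 h with h1 | ⟨rfl, h1⟩
      · exact lcons_iff.2 (.inl h1)
      · exact lcons_iff.2 (.inr ⟨rfl, ih h1 (by simpa using hn)⟩)

lemma le_append_self (s u : List α) : s ≤ s ++ u := by
  simpa using append_le_append_left' s (lnil_le u)

/-- the Lyndon shuffle lemma -/
lemma lyndon_shuf {l w x s : List α} (hl : ∀ u v : List α, l = u ++ v → u ≠ [] → v ≠ [] → l < v)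
    (hw : w ≠ []) (hx : x ≠ []) (hlen : w.length + x.length = l.length)
    (hwl : w ≤ l) (hxl : x ≤ l) (hs : Shuf w x s) : s < l := by
  have hwp := List.length_pos_of_ne_nil hw
  have hxp := List.length_pos_of_ne_nil hx
  obtain ⟨s1, h1, hle1⟩ := hs.repl_le (le_take_of_lt hxl (by omega)) (by simp; omega)
  obtain ⟨s2, h2, hle2⟩ := h1.symm.repl_le (le_take_of_lt hwl (by omega)) (by simp; omega)
  refine (hle1.trans hle2).trans_lt ?_
  have h3 := h2.append (Shuf.app (l.drop x.length) (l.drop w.length))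
  rw [List.take_append_drop, List.take_append_drop] at h3
  have hl' : ∀ u v : List α, l = u ++ v → v ≠ [] → l ≤ v := by
    intro u v h hv
    by_cases hu : u = []
    · subst hu; rw [h]; rfl
    · exact (hl u v h hu hv).le
  have h4 := shuf_suffix_le hl' l [] _ rfl h3
  have hlen2 : s2.length = l.length := by rw [h2.length]; simp only [List.length_take]; omega
  have hS : l < l.drop x.length := by
    refine hl (l.take x.length) _ (List.take_append_drop _ _).symm ?_ ?_
    · intro h; have := congrArg List.length h; simp only [List.length_take, List.length_drop, List.length_nil] at this; omega
    · intro h; have := congrArg List.length h; simp only [List.length_take, List.length_drop, List.length_nil] at this; omega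
  have h0 : s2 ≤ l := by
    rcases le_total s2 l with h | h
    · exact h
    rcases LL_or_initial h with h5 | h5
    · exact absurd (h5.append_lt _ _) (not_lt.2 h4)
    · exact (h5.eq_of_length hlen2.symm).ge
  rcases LL_or_initial h0 with h5 | h5
  · exact h5.lt
  · obtain rfl := h5.eq_of_length hlen2
    have h6 := le_of_append_le_append_left _ h4
    exact absurd (hS.trans_le ((le_append_self _ _).trans h6)) (lt_irrefl _)

end Words


lemma deg_nil : deg ([] : Word r) = 0 := by funext i; simp [deg]

lemma deg_cons (c : Fin r) (w : Word r) : deg (c :: w) = deg w + Pi.single c 1 := by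
  funext i
  simp only [deg, List.count_cons, Pi.add_apply, Pi.single_apply, beq_iff_eq]
  congr 1
  by_cases h : c = i
  · simp [h]
  · simp [h, Ne.symm h]

lemma deg_append (a b : Word r) : deg (a ++ b) = deg a + deg b := by
  funext i; simp [deg]

lemma deg_singleton (c : Fin r) : deg [c] = Pi.single c 1 := by
  rw [deg_cons, deg_nil, zero_add]

/-- the free side -/
abbrev F0 (r : ℕ) := Word r →₀ ℝ

/-- evaluation pairing -/
def pg (f : F0 r) : Fn r →ₗ[ℝ] ℝ where
  toFun u := Finsupp.linearCombination ℝ u f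
  map_add' u v := by
    simp [Finsupp.linearCombination_apply, Finsupp.sum, mul_add, Finset.sum_add_distrib]
  map_smul' a u := by
    simp only [Finsupp.linearCombination_apply, Finsupp.sum, Pi.smul_apply, smul_eq_mul,
      RingHom.id_apply, Finset.mul_sum]
    exact Finset.sum_congr rfl fun _ _ => by ring

lemma pg_def (f : F0 r) (u : Fn r) : pg f u = Finsupp.linearCombination ℝ u f := rfl

lemma pg_single (w : Word r) (a : ℝ) (u : Fn r) : pg (Finsupp.single w a) u = a * u w := by
  simp [pg_def]

lemma pg_add (f g : F0 r) (u : Fn r) : pg (f + g) u = pg f u + pg g u := by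
  simp [pg_def]

lemma pg_smul (a : ℝ) (f : F0 r) (u : Fn r) : pg (a • f) u = a * pg f u := by
  simp [pg_def]

lemma pg_zero (u : Fn r) : pg 0 u = 0 := by simp [pg_def]

/-- pairing as a bilinear map -/
def pgL : F0 r →ₗ[ℝ] Fn r →ₗ[ℝ] ℝ where
  toFun := pg
  map_add' f g := by ext u; exact pg_add f g u
  map_smul' a f := by ext u; exact pg_smul a f u

namespace Dat

variable (D : Dat r)

def psi : Word r → Fn r
  | [] => dlt []
  | c :: w => D.mul (dlt [c]) (psi w)

lemma psi_cons (c : Fin r) (w : Word r) : D.psi (c :: w) = D.mul (dlt [c]) (D.psi w) := rfl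

lemma psi_nil : D.psi [] = dlt [] := rfl

lemma psi_singleton (c : Fin r) : D.psi [c] = dlt [c] := by
  rw [psi_cons, psi_nil, mul_one]

lemma psi_append (a b : Word r) : D.psi (a ++ b) = D.mul (D.psi a) (D.psi b) := by
  induction a with
  | nil => rw [psi_nil, one_mul]; rfl
  | cons c a ih => rw [List.cons_append, psi_cons, psi_cons, ih, mul_assoc]

lemma kt_dlt (c : Fin r) (w : Word r) : D.kt c (dlt w) = D.q ^ (-(D.pr c w)) • dlt w := by
  ext s
  by_cases h : s = w <;> simp [kt_apply, dlt, h]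

lemma kt_psi (c : Fin r) (w : Word r) : D.kt c (D.psi w) = D.q ^ (-(D.pr c w)) • D.psi w := by
  induction w with
  | nil => rw [psi_nil, kt_dlt]
  | cons e w ih =>
    rw [psi_cons, kt_mul, ih, kt_dlt, smul_mul, mul_smul, smul_smul]
    simp only [pr_cons, pr_nil, add_zero, neg_add]
    rw [zpow_add₀ D.q_ne]

def Psi : F0 r →ₗ[ℝ] Fn r := Finsupp.linearCombination ℝ D.psi

lemma Psi_single (w : Word r) (a : ℝ) : D.Psi (Finsupp.single w a) = a • D.psi w := by
  simp [Psi]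

lemma Psi_map_cons (e : Fin r) (f : F0 r) :
    D.Psi (Finsupp.mapDomain (List.cons e) f) = D.mul (dlt [e]) (D.Psi f) := by
  induction f using Finsupp.induction_linear with
  | zero => simp [mul_zero]
  | add f g hf hg => rw [Finsupp.mapDomain_add, map_add, map_add, hf, hg, mul_add]
  | single w a => rw [Finsupp.mapDomain_single, Psi_single, Psi_single, mul_smul, psi_cons]

def Dc (c : Fin r) : Word r → F0 r
  | [] => 0
  | e :: w => Finsupp.mapDomain (List.cons e) (Dc c w) +
      if e = c then Finsupp.single w (D.q ^ (-(D.pr c w))) else 0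

lemma pg_map_cons (e : Fin r) (f : F0 r) (h : Fn r) :
    pg (Finsupp.mapDomain (List.cons e) f) h = pg f (dl e h) := by
  simp only [pg_def, Finsupp.linearCombination_mapDomain]
  rfl

lemma letter_mul (c : Fin r) (h : Fn r) (w : Word r) :
    D.mul (dlt [c]) h w = pg (D.Dc c w) h := by
  induction w generalizing h with
  | nil => simp [mul_nil, Dc, pg_zero, dlt]
  | cons e w ih =>
    rw [mul_cons, ih, Dc, pg_add, pg_map_cons, dl_dlt_cons]
    by_cases hc : e = c
    · subst hc; simp [one_mul, kt_apply, pg_single]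
    · simp [hc, zero_mul, pg_zero]

lemma dl_psi (c : Fin r) (w : Word r) : dl c (D.psi w) = D.Psi (D.Dc c w) := by
  induction w with
  | nil => simp [psi_nil, dl_dlt_nil, Dc]
  | cons e w ih =>
    rw [psi_cons, dl_mul, ih, Dc, map_add, Psi_map_cons, dl_dlt_cons]
    by_cases hc : e = c
    · subst hc; simp [one_mul, kt_psi, Psi_single]
    · simp [hc, Ne.symm hc, zero_mul]

lemma Psi_apply (f : F0 r) (w : Word r) : D.Psi f w = pg f (fun v => D.psi v w) := by
  simp only [Psi, pg_def, Finsupp.linearCombination_apply, Finsupp.sum, Finset.sum_apply,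
    Pi.smul_apply]

lemma psi_symm (w v : Word r) : D.psi w v = D.psi v w := by
  induction w generalizing v with
  | nil =>
    cases v with
    | nil => rfl
    | cons c v => simp [psi_nil, psi_cons, mul_nil, dlt]
  | cons c w ih =>
    have h : D.psi v (c :: w) = dl c (D.psi v) w := rfl
    rw [h, dl_psi, Psi_apply, psi_cons, letter_mul]
    congr 1; ext v'; exact ih v'

lemma pg_Psi_symm (f g : F0 r) : pg f (D.Psi g) = pg g (D.Psi f) := by
  induction f using Finsupp.induction_linear with
  | zero => simp [pg_zero]
  | add f f' hf hf' => rw [pg_add, map_add, map_add, hf, hf']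
  | single w a =>
    rw [pg_single, Psi_single, map_smul, Psi_apply, smul_eq_mul]
    congr 2; ext v; exact D.psi_symm v w

def U : Submodule ℝ (Fn r) := LinearMap.range D.Psi

lemma psi_mem (w : Word r) : D.psi w ∈ D.U := ⟨Finsupp.single w 1, by simp [Psi_single]⟩

lemma U_induction {P : Fn r → Prop} (hpsi : ∀ w, P (D.psi w)) (h0 : P 0)
    (hadd : ∀ u v, P u → P v → P (u + v)) (hsmul : ∀ (a : ℝ) u, P u → P (a • u))
    {u : Fn r} (hu : u ∈ D.U) : P u := by
  obtain ⟨f, rfl⟩ := hu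
  induction f using Finsupp.induction_linear with
  | zero => simpa using h0
  | add f g hf hg => rw [map_add]; exact hadd _ _ hf hg
  | single w a => rw [Psi_single]; exact hsmul _ _ (hpsi w)

lemma mul_mem {u v : Fn r} (hu : u ∈ D.U) (hv : v ∈ D.U) : D.mul u v ∈ D.U := by
  refine D.U_induction (P := fun u => D.mul u v ∈ D.U) ?_ ?_ ?_ ?_ hu
  · intro w
    refine D.U_induction (P := fun v => D.mul (D.psi w) v ∈ D.U) ?_ ?_ ?_ ?_ hv
    · intro x; rw [← psi_append]; exact D.psi_mem _
    · rw [mul_zero]; exact zero_mem _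
    · intro u v hu hv; rw [mul_add]; exact add_mem hu hv
    · intro a u hu; rw [mul_smul]; exact Submodule.smul_mem _ _ hu
  · rw [zero_mul]; exact zero_mem _
  · intro u v hu hv; rw [add_mul]; exact add_mem hu hv
  · intro a u hu; rw [smul_mul]; exact Submodule.smul_mem _ _ hu

lemma dl_mem (c : Fin r) {u : Fn r} (hu : u ∈ D.U) : dl c u ∈ D.U := by
  refine D.U_induction (P := fun u => dl c u ∈ D.U) ?_ ?_ ?_ ?_ hu
  · intro w; rw [dl_psi]; exact ⟨_, rfl⟩
  · rw [map_zero]; exact zero_mem _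
  · intro u v hu hv; rw [map_add]; exact add_mem hu hv
  · intro a u hu; rw [map_smul]; exact Submodule.smul_mem _ _ hu

lemma dr_letter (c e : Fin r) : dr c (dlt [e]) = if c = e then dlt [] else 0 :=
  dr_dlt_snoc c e []

lemma dr_psi_mem (c : Fin r) (w : Word r) : dr c (D.psi w) ∈ D.U := by
  induction w with
  | nil => rw [psi_nil, dr_dlt_nil]; exact zero_mem _
  | cons e w ih =>
    rw [psi_cons, dr_mul, kt_dlt, smul_mul, dr_letter, ← psi_singleton]
    refine add_mem ?_ (Submodule.smul_mem _ _ (D.mul_mem (D.psi_mem _) ih))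
    split_ifs
    · rw [one_mul]; exact D.psi_mem _
    · rw [zero_mul]; exact zero_mem _

lemma dr_mem (c : Fin r) {u : Fn r} (hu : u ∈ D.U) : dr c u ∈ D.U := by
  refine D.U_induction (P := fun u => dr c u ∈ D.U) (D.dr_psi_mem c) ?_ ?_ ?_ hu
  · rw [map_zero]; exact zero_mem _
  · intro u v hu hv; rw [map_add]; exact add_mem hu hv
  · intro a u hu; rw [map_smul]; exact Submodule.smul_mem _ _ hu

lemma exists_section : ∃ σ : Fn r →ₗ[ℝ] F0 r, ∀ u ∈ D.U, D.Psi (σ u) = u := by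
  obtain ⟨τ, hτ⟩ := D.Psi.rangeRestrict.exists_rightInverse_of_surjective D.Psi.range_rangeRestrict
  obtain ⟨σ, hσ⟩ := τ.exists_extend
  refine ⟨σ, fun u hu => ?_⟩
  have h1 : σ u = τ ⟨u, hu⟩ := by rw [← hσ]; rfl
  rw [h1]
  have := LinearMap.congr_fun hτ ⟨u, hu⟩
  exact congrArg Subtype.val this

def sec : Fn r →ₗ[ℝ] F0 r := D.exists_section.choose

lemma Psi_sec {u : Fn r} (hu : u ∈ D.U) : D.Psi (D.sec u) = u := D.exists_section.choose_spec u hu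

/-- the bilinear form -/
def ip : Fn r →ₗ[ℝ] Fn r →ₗ[ℝ] ℝ := pgL.comp D.sec

lemma ip_def (u v : Fn r) : D.ip u v = pg (D.sec u) v := rfl

lemma ip_Psi (f : F0 r) {v : Fn r} (hv : v ∈ D.U) : D.ip (D.Psi f) v = pg f v := by
  obtain ⟨g, rfl⟩ := hv
  rw [ip_def, pg_Psi_symm, D.Psi_sec ⟨f, rfl⟩, pg_Psi_symm]

lemma ip_psi (w : Word r) {v : Fn r} (hv : v ∈ D.U) : D.ip (D.psi w) v = v w := by
  have := D.ip_Psi (Finsupp.single w 1) hv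
  rwa [Psi_single, one_smul, pg_single, _root_.one_mul] at this

lemma ip_symm {u v : Fn r} (hu : u ∈ D.U) (hv : v ∈ D.U) : D.ip u v = D.ip v u := by
  obtain ⟨f, rfl⟩ := hu
  obtain ⟨g, rfl⟩ := hv
  rw [D.ip_Psi f ⟨g, rfl⟩, D.ip_Psi g ⟨f, rfl⟩, pg_Psi_symm]

/-- delete a given prefix -/
def dlw (w : Word r) : Fn r →ₗ[ℝ] Fn r where
  toFun f := fun s => f (w ++ s)
  map_add' f g := by ext s; simp
  map_smul' a f := by ext s; simp

/-- delete a given suffix -/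
def drw (w : Word r) : Fn r →ₗ[ℝ] Fn r where
  toFun f := fun s => f (s ++ w)
  map_add' f g := by ext s; simp
  map_smul' a f := by ext s; simp

lemma dlw_apply (w s : Word r) (f : Fn r) : dlw w f s = f (w ++ s) := rfl
lemma drw_apply (w s : Word r) (f : Fn r) : drw w f s = f (s ++ w) := rfl

lemma dlw_mem (w : Word r) {u : Fn r} (hu : u ∈ D.U) : dlw w u ∈ D.U := by
  induction w generalizing u with
  | nil => exact hu
  | cons c w ih => exact ih (D.dl_mem c hu)

lemma drw_mem (w : Word r) {u : Fn r} (hu : u ∈ D.U) : drw w u ∈ D.U := by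
  induction w generalizing u with
  | nil =>
    have : drw [] u = u := by ext s; simp [drw_apply]
    rwa [this]
  | cons c w ih =>
    have : drw (c :: w) u = dr c (drw w u) := by ext s; simp [drw_apply, dr_apply]
    rw [this]; exact D.dr_mem c (ih hu)

lemma ip_psi_mul (w : Word r) {y v : Fn r} (hy : y ∈ D.U) (hv : v ∈ D.U) :
    D.ip (D.mul (D.psi w) y) v = D.ip y (dlw w v) := by
  refine D.U_induction (P := fun y => D.ip (D.mul (D.psi w) y) v = D.ip y (dlw w v)) ?_ ?_ ?_ ?_ hy
  · intro x; rw [← psi_append, D.ip_psi _ hv, D.ip_psi _ (D.dlw_mem w hv)]; rfl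
  · simp [mul_zero]
  · intro a b ha hb; simp only [mul_add, map_add, LinearMap.add_apply, ha, hb]
  · intro a b hb; simp only [mul_smul, map_smul, LinearMap.smul_apply, hb]

lemma ip_mul_psi (w : Word r) {y v : Fn r} (hy : y ∈ D.U) (hv : v ∈ D.U) :
    D.ip (D.mul y (D.psi w)) v = D.ip y (drw w v) := by
  refine D.U_induction (P := fun y => D.ip (D.mul y (D.psi w)) v = D.ip y (drw w v)) ?_ ?_ ?_ ?_ hy
  · intro x; rw [← psi_append, D.ip_psi _ hv, D.ip_psi _ (D.drw_mem w hv)]; rfl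
  · simp [zero_mul]
  · intro a b ha hb; simp only [add_mul, map_add, LinearMap.add_apply, ha, hb]
  · intro a b hb; simp only [smul_mul, map_smul, LinearMap.smul_apply, hb]

/-- homogeneous components of `U` -/
def US (ν : Fin r → ℕ) : Submodule ℝ (Fn r) where
  carrier := {u | u ∈ D.U ∧ ∀ w, u w ≠ 0 → deg w = ν}
  add_mem' := by
    rintro a b ⟨ha, ha'⟩ ⟨hb, hb'⟩
    refine ⟨add_mem ha hb, fun w hw => ?_⟩
    by_cases h : a w = 0
    · exact hb' w (by simpa [h] using hw)
    · exact ha' w h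
  zero_mem' := ⟨zero_mem _, fun w hw => absurd rfl hw⟩
  smul_mem' := by
    rintro c a ⟨ha, ha'⟩
    exact ⟨Submodule.smul_mem _ _ ha, fun w hw => ha' w (fun h => hw (by simp [h]))⟩

variable {D}

lemma US_U {ν : Fin r → ℕ} {u : Fn r} (hu : u ∈ D.US ν) : u ∈ D.U := hu.1

lemma US_deg {ν : Fin r → ℕ} {u : Fn r} (hu : u ∈ D.US ν) {w : Word r} (h : u w ≠ 0) :
    deg w = ν := hu.2 w h

lemma US_zero {ν : Fin r → ℕ} {u : Fn r} (hu : u ∈ D.US ν) {w : Word r} (h : deg w ≠ ν) :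
    u w = 0 := by
  by_contra h'; exact h (hu.2 w h')

variable (D)

lemma dl_US {ν : Fin r → ℕ} (c : Fin r) {u : Fn r} (hu : u ∈ D.US (ν + Pi.single c 1)) :
    dl c u ∈ D.US ν := by
  refine ⟨D.dl_mem c hu.1, fun w hw => ?_⟩
  have := hu.2 (c :: w) hw
  rw [deg_cons] at this
  exact add_right_cancel this

lemma dr_US {ν : Fin r → ℕ} (c : Fin r) {u : Fn r} (hu : u ∈ D.US (ν + Pi.single c 1)) :
    dr c u ∈ D.US ν := by
  refine ⟨D.dr_mem c hu.1, fun w hw => ?_⟩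
  have := hu.2 (w ++ [c]) hw
  rw [deg_append, deg_singleton] at this
  exact add_right_cancel this

lemma dl_US_zero {ν : Fin r → ℕ} {c : Fin r} (hc : ν c = 0) {u : Fn r} (hu : u ∈ D.US ν) :
    dl c u = 0 := by
  ext w
  refine US_zero hu fun h => ?_
  rw [deg_cons] at h
  have := congrFun h c
  simp [hc] at this

lemma dr_US_zero {ν : Fin r → ℕ} {c : Fin r} (hc : ν c = 0) {u : Fn r} (hu : u ∈ D.US ν) :
    dr c u = 0 := by
  ext w
  refine US_zero hu fun h => ?_
  rw [deg_append, deg_singleton] at h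
  have := congrFun h c
  simp [hc] at this

lemma dlw_US {ν μ : Fin r → ℕ} {a : Word r} (ha : deg a = μ) {u : Fn r} (hu : u ∈ D.US (μ + ν)) :
    dlw a u ∈ D.US ν := by
  refine ⟨D.dlw_mem a hu.1, fun w hw => ?_⟩
  have := hu.2 (a ++ w) hw
  rw [deg_append, ha] at this
  exact add_left_cancel this

lemma drw_US {ν μ : Fin r → ℕ} {a : Word r} (ha : deg a = ν) {u : Fn r} (hu : u ∈ D.US (μ + ν)) :
    drw a u ∈ D.US μ := by
  refine ⟨D.drw_mem a hu.1, fun w hw => ?_⟩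
  have := hu.2 (w ++ a) hw
  rw [deg_append, ha] at this
  exact add_right_cancel this

lemma exists_shuf {f g : Fn r} {s : Word r} (h : D.mul f g s ≠ 0) :
    ∃ s1 s2, Shuf s1 s2 s ∧ f s1 ≠ 0 ∧ g s2 ≠ 0 := by
  induction s generalizing f g with
  | nil =>
    rw [mul_nil] at h
    exact ⟨[], [], .nil, left_ne_zero_of_mul h, right_ne_zero_of_mul h⟩
  | cons c s ih =>
    rw [mul_cons] at h
    by_cases h1 : D.mul f (dl c g) s = 0
    · rw [h1, zero_add] at h
      obtain ⟨s1, s2, h2, h3, h4⟩ := ih h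
      rw [kt_apply] at h4
      exact ⟨c :: s1, s2, .left c h2, h3, right_ne_zero_of_mul h4⟩
    · obtain ⟨s1, s2, h2, h3, h4⟩ := ih h1
      exact ⟨s1, c :: s2, .right c h2, h3, h4⟩

lemma _root_.Shuf.deg {a b s : Word r} (h : Shuf a b s) : deg s = deg a + deg b := by
  funext i; exact h.count i

lemma mul_US {μ ν : Fin r → ℕ} {u v : Fn r} (hu : u ∈ D.US μ) (hv : v ∈ D.US ν) :
    D.mul u v ∈ D.US (μ + ν) := by
  refine ⟨D.mul_mem hu.1 hv.1, fun w hw => ?_⟩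
  obtain ⟨s1, s2, h1, h2, h3⟩ := D.exists_shuf hw
  rw [h1.deg, hu.2 _ h2, hv.2 _ h3]

lemma one_US : dlt [] ∈ D.US 0 := by
  refine ⟨D.psi_mem [], fun w hw => ?_⟩
  by_cases h : w = []
  · rw [h, deg_nil]
  · simp [dlt, h] at hw

lemma letter_US (c : Fin r) : dlt [c] ∈ D.US (Pi.single c 1) := by
  refine ⟨D.psi_singleton c ▸ D.psi_mem [c], fun w hw => ?_⟩
  by_cases h : w = [c]
  · rw [h, deg_singleton]
  · simp [dlt, h] at hw

lemma psi_US (w : Word r) : D.psi w ∈ D.US (deg w) := by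
  induction w with
  | nil => rw [deg_nil]; exact D.one_US
  | cons c w ih => rw [deg_cons, add_comm]; exact D.mul_US (D.letter_US c) ih

/-- homogeneous elements come from homogeneous elements of the free side -/
lemma US_exists {ν : Fin r → ℕ} {u : Fn r} (hu : u ∈ D.US ν) :
    ∃ f : F0 r, D.Psi f = u ∧ ∀ w, f w ≠ 0 → deg w = ν := by
  classical
  obtain ⟨⟨f, rfl⟩, h⟩ := hu
  refine ⟨f.filter (fun w => deg w = ν), ?_, fun w hw => ?_⟩
  · have key : ∀ (P : Word r → Prop) [DecidablePred P] (w : Word r), (∀ v, P v → deg v ≠ deg w) →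
        D.Psi (f.filter P) w = 0 := by
      intro P _ w hP
      rw [Psi_apply, pg_def, Finsupp.linearCombination_apply, Finsupp.sum]
      refine Finset.sum_eq_zero fun v hv => ?_
      rw [Finsupp.support_filter, Finset.mem_filter] at hv
      rw [US_zero (D.psi_US v) (hP v hv.2).symm, smul_zero]
    ext w
    have h1 := congrArg (fun g => D.Psi g w) (f.filter_add_filter_not (fun w => deg w = ν))
    simp only [map_add, Pi.add_apply] at h1
    by_cases hw : deg w = ν
    · rw [key (fun v => ¬ deg v = ν) w (fun v hv => by rwa [hw]), add_zero] at h1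
      exact h1
    · rw [key (fun v => deg v = ν) w (fun v hv => by rw [hv]; exact Ne.symm hw)]
      by_contra h2
      exact hw (h w (Ne.symm h2))
  · by_contra h1
    exact hw (Finsupp.filter_apply_neg _ _ h1)

lemma US_induction {ν : Fin r → ℕ} {P : Fn r → Prop} (hpsi : ∀ w, deg w = ν → P (D.psi w))
    (h0 : P 0) (hadd : ∀ u v, P u → P v → P (u + v)) (hsmul : ∀ (a : ℝ) u, P u → P (a • u))
    {u : Fn r} (hu : u ∈ D.US ν) : P u := by
  obtain ⟨f, rfl, hf⟩ := D.US_exists hu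
  rw [Psi, Finsupp.linearCombination_apply, Finsupp.sum]
  have : ∀ s : Finset (Word r), (∀ w ∈ s, deg w = ν) → P (∑ w ∈ s, f w • D.psi w) := by
    classical
    intro s
    induction s using Finset.induction_on with
    | empty => intro _; simpa using h0
    | insert a s ha ih =>
      intro h
      rw [Finset.sum_insert ha]
      exact hadd _ _ (hsmul _ _ (hpsi _ (h a (by simp)))) (ih fun w hw => h w (by simp [hw]))
  exact this _ fun w hw => hf w (by simpa using hw)

lemma ip_US_ne {μ ν : Fin r → ℕ} (h : μ ≠ ν) {u v : Fn r} (hu : u ∈ D.US μ) (hv : v ∈ D.US ν) :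
    D.ip u v = 0 := by
  refine D.US_induction (P := fun u => D.ip u v = 0) ?_ ?_ ?_ ?_ hu
  · intro w hw; rw [D.ip_psi w hv.1]; exact US_zero hv (by rwa [hw])
  · simp
  · intro a b ha hb; simp [ha, hb]
  · intro a b hb; simp [hb]

/-- form of a simple root with a degree -/
def pd (c : Fin r) (ν : Fin r → ℕ) : ℤ := ∑ j, D.p c j * (ν j : ℤ)

lemma pd_zero (c : Fin r) : D.pd c 0 = 0 := by simp [pd]

lemma pd_add (c : Fin r) (μ ν : Fin r → ℕ) : D.pd c (μ + ν) = D.pd c μ + D.pd c ν := by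
  simp [pd, _root_.mul_add, Finset.sum_add_distrib]

lemma pd_single (c e : Fin r) : D.pd c (Pi.single e 1) = D.p c e := by
  rw [pd, Finset.sum_eq_single e]
  · simp
  · intro b _ hb; simp [hb]
  · simp

lemma pr_eq (c : Fin r) (w : Word r) : D.pr c w = D.pd c (deg w) := by
  induction w with
  | nil => simp [deg_nil, pd_zero]
  | cons e w ih => rw [pr_cons, deg_cons, pd_add, pd_single, ih, add_comm]

lemma kt_US {ν : Fin r → ℕ} (c : Fin r) {u : Fn r} (hu : u ∈ D.US ν) :
    D.kt c u = D.q ^ (-(D.pd c ν)) • u := by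
  ext w
  rw [kt_apply, Pi.smul_apply, smul_eq_mul]
  by_cases h : u w = 0
  · rw [h, MulZeroClass.mul_zero, MulZeroClass.mul_zero]
  · rw [pr_eq, hu.2 w h]

end Dat


namespace Dat

variable (D : Dat r)

/-- left multiplication by a letter -/
def L (i : Fin r) : Fn r →ₗ[ℝ] Fn r := D.mulL (dlt [i])

/-- right multiplication by a letter -/
def R (i : Fin r) : Fn r →ₗ[ℝ] Fn r := D.mulL.flip (dlt [i])

lemma L_apply (i : Fin r) (y : Fn r) : D.L i y = D.mul (dlt [i]) y := rfl
lemma R_apply (i : Fin r) (y : Fn r) : D.R i y = D.mul y (dlt [i]) := rfl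

lemma L_R (i j : Fin r) (y : Fn r) : D.L i (D.R j y) = D.R j (D.L i y) := by
  simp only [L_apply, R_apply, mul_assoc]

lemma kt_letter (c e : Fin r) : D.kt c (dlt [e]) = D.q ^ (-(D.p c e)) • dlt [e] := by
  rw [kt_dlt]; simp

lemma dl_L_same (i : Fin r) (y : Fn r) : dl i (D.L i y) = D.L i (dl i y) + D.kt i y := by
  rw [L_apply, dl_mul, dl_dlt_cons, if_pos rfl, one_mul]; rfl

lemma dl_L_ne {c i : Fin r} (h : c ≠ i) (y : Fn r) : dl c (D.L i y) = D.L i (dl c y) := by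
  rw [L_apply, dl_mul, dl_dlt_cons, if_neg h, zero_mul, add_zero]; rfl

lemma dl_R_same (i : Fin r) (y : Fn r) :
    dl i (D.R i y) = y + D.q ^ (-(D.p i i)) • D.R i (dl i y) := by
  rw [R_apply, dl_mul, dl_dlt_cons, if_pos rfl, mul_one, kt_letter, mul_smul]; rfl

lemma dl_R_ne {c i : Fin r} (h : c ≠ i) (y : Fn r) :
    dl c (D.R i y) = D.q ^ (-(D.p c i)) • D.R i (dl c y) := by
  rw [R_apply, dl_mul, dl_dlt_cons, if_neg h, mul_zero, kt_letter, mul_smul, zero_add]; rfl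

lemma dr_R_same (i : Fin r) (y : Fn r) : dr i (D.R i y) = D.R i (dr i y) + D.kt i y := by
  rw [R_apply, dr_mul, dr_letter, if_pos rfl, mul_one]; rfl

lemma dr_L_same (i : Fin r) (y : Fn r) :
    dr i (D.L i y) = y + D.q ^ (-(D.p i i)) • D.L i (dr i y) := by
  rw [L_apply, dr_mul, dr_letter, if_pos rfl, one_mul, kt_letter, smul_mul]; rfl

lemma L_U (i : Fin r) {y : Fn r} (hy : y ∈ D.U) : D.L i y ∈ D.U :=
  D.mul_mem (D.letter_US i).1 hy

lemma R_U (i : Fin r) {y : Fn r} (hy : y ∈ D.U) : D.R i y ∈ D.U :=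
  D.mul_mem hy (D.letter_US i).1

lemma L_US (i : Fin r) {ν : Fin r → ℕ} {y : Fn r} (hy : y ∈ D.US ν) :
    D.L i y ∈ D.US (ν + Pi.single i 1) := by
  rw [add_comm]; exact D.mul_US (D.letter_US i) hy

lemma R_US (i : Fin r) {ν : Fin r → ℕ} {y : Fn r} (hy : y ∈ D.US ν) :
    D.R i y ∈ D.US (ν + Pi.single i 1) :=
  D.mul_US hy (D.letter_US i)

lemma ip_L (i : Fin r) {y v : Fn r} (hy : y ∈ D.U) (hv : v ∈ D.U) :
    D.ip (D.L i y) v = D.ip y (dl i v) := by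
  have := D.ip_psi_mul [i] hy hv
  rw [psi_singleton] at this; exact this

lemma ip_R (i : Fin r) {y v : Fn r} (hy : y ∈ D.U) (hv : v ∈ D.U) :
    D.ip (D.R i y) v = D.ip y (dr i v) := by
  have := D.ip_mul_psi [i] hy hv
  rw [psi_singleton] at this; exact this

/-- the raising operator on `ker (dl i)` -/
def Fk (i : Fin r) (k : ℤ) : Fn r →ₗ[ℝ] Fn r := D.R i - D.q ^ k • D.L i

lemma Fk_apply (i : Fin r) (k : ℤ) (z : Fn r) : D.Fk i k z = D.R i z - D.q ^ k • D.L i z := rfl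

lemma zpow_neg_cancel (k : ℤ) : D.q ^ k * D.q ^ (-k) = 1 := by
  rw [← zpow_add₀ D.q_ne]; simp

lemma Fk_US (i : Fin r) (k : ℤ) {ν : Fin r → ℕ} {z : Fn r} (hz : z ∈ D.US ν) :
    D.Fk i k z ∈ D.US (ν + Pi.single i 1) :=
  sub_mem (D.R_US i hz) (Submodule.smul_mem _ _ (D.L_US i hz))

lemma dl_Fk (i : Fin r) {ν : Fin r → ℕ} {z : Fn r} (hz : z ∈ D.US ν) (h : dl i z = 0) :
    dl i (D.Fk i (D.pd i ν) z) = 0 := by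
  rw [Fk_apply, map_sub, map_smul, dl_R_same, dl_L_same, h, D.kt_US i hz]
  rw [map_zero, map_zero, smul_zero, add_zero, zero_add, smul_smul, zpow_neg_cancel, one_smul, sub_self]

lemma dr_Fk (i : Fin r) {ν : Fin r → ℕ} {z : Fn r} (hz : z ∈ D.US ν) :
    dr i (D.Fk i (D.pd i ν) z) = D.Fk i (D.pd i ν - D.p i i) (dr i z) +
      (D.q ^ (-(D.pd i ν)) - D.q ^ (D.pd i ν)) • z := by
  rw [Fk_apply, map_sub, map_smul, dr_R_same, dr_L_same, D.kt_US i hz, Fk_apply, smul_add,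
    smul_smul, sub_eq_add_neg (D.pd i ν), zpow_add₀ D.q_ne, sub_smul]
  abel

lemma ip_Fk (i : Fin r) (k : ℤ) {z v : Fn r} (hz : z ∈ D.U) (hv : v ∈ D.U) (h : dl i v = 0) :
    D.ip (D.Fk i k z) v = D.ip z (dr i v) := by
  rw [Fk_apply, map_sub, map_smul, LinearMap.sub_apply, LinearMap.smul_apply, D.ip_L i hz hv, h,
    map_zero, smul_zero, sub_zero, D.ip_R i hz hv]

/-- chains -/
def ch (i : Fin r) (k : ℤ) (y : Fn r) : ℕ → Fn r
  | 0 => y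
  | t + 1 => D.Fk i (k + D.p i i * t) (ch i k y t)

lemma ch_zero (i : Fin r) (k : ℤ) (y : Fn r) : D.ch i k y 0 = y := rfl
lemma ch_succ (i : Fin r) (k : ℤ) (y : Fn r) (t : ℕ) :
    D.ch i k y (t + 1) = D.Fk i (k + D.p i i * t) (D.ch i k y t) := rfl

lemma add_single_succ (ν : Fin r → ℕ) (i : Fin r) (t : ℕ) :
    ν + Pi.single i (t + 1) = ν + Pi.single i t + Pi.single i 1 := by
  rw [add_assoc, ← Pi.single_add]

lemma pd_add_single (i : Fin r) (ν : Fin r → ℕ) (t : ℕ) :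
    D.pd i (ν + Pi.single i t) = D.pd i ν + D.p i i * t := by
  rw [pd_add]
  congr 1
  rw [pd, Finset.sum_eq_single i]
  · simp
  · intro b _ hb; simp [hb]
  · simp

lemma ch_US (i : Fin r) {ν : Fin r → ℕ} (k : ℤ) {y : Fn r} (hy : y ∈ D.US ν) (t : ℕ) :
    D.ch i k y t ∈ D.US (ν + Pi.single i t) := by
  induction t with
  | zero => simpa [ch_zero] using hy
  | succ t ih => rw [add_single_succ]; exact D.Fk_US i _ ih

lemma dl_ch (i : Fin r) {ν : Fin r → ℕ} {y : Fn r} (hy : y ∈ D.US ν) (h : dl i y = 0) (t : ℕ) :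
    dl i (D.ch i (D.pd i ν) y t) = 0 := by
  induction t with
  | zero => exact h
  | succ t ih =>
    have := D.dl_Fk i (D.ch_US i (D.pd i ν) hy t) ih
    rwa [pd_add_single] at this

/-- the scalars of a chain -/
def cc (i : Fin r) (k : ℤ) (t : ℕ) : ℝ :=
  ∑ s ∈ Finset.range t, (D.q ^ (-(k + D.p i i * s)) - D.q ^ (k + D.p i i * s))

lemma dr_ch (i : Fin r) {ν : Fin r → ℕ} {y : Fn r} (hy : y ∈ D.US ν)
    (h' : dr i y = 0) (t : ℕ) :
    dr i (D.ch i (D.pd i ν) y (t + 1)) = D.cc i (D.pd i ν) (t + 1) • D.ch i (D.pd i ν) y t := by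
  induction t with
  | zero =>
    have := D.dr_Fk i hy
    rw [h', map_zero, zero_add] at this
    simp only [ch_succ, ch_zero, cc, zero_add, Finset.sum_range_one, Nat.cast_zero,
      MulZeroClass.mul_zero, add_zero, this]
  | succ t ih =>
    have := D.dr_Fk i (D.ch_US i (D.pd i ν) hy (t + 1))
    rw [pd_add_single, ih, map_smul] at this
    have e : D.pd i ν + D.p i i * ((t + 1 : ℕ) : ℤ) - D.p i i = D.pd i ν + D.p i i * (t : ℤ) := by
      push_cast; ring
    rw [e, ← ch_succ D i _ y t, ← ch_succ, ← add_smul] at this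
    rw [this, cc, cc, Finset.sum_range_succ _ (t + 1)]

/-! ### Serre relations and nilpotency -/

lemma p_self (i : Fin r) : D.p i i = 2 * D.C.d i := by
  rw [p, D.C.diag]; ring

lemma d_pos (i : Fin r) : 0 < D.C.d i := by
  rcases D.C.dval i with h | h | h <;> omega

lemma L_R_pow_one (i : Fin r) (t : ℕ) : D.L i ((D.R i ^ t) (dlt [])) = (D.R i ^ (t + 1)) (dlt []) := by
  induction t with
  | zero => simp [L_apply, R_apply, one_mul, mul_one]
  | succ t ih => rw [pow_succ', Module.End.mul_apply, L_R, ih, ← Module.End.mul_apply, ← pow_succ']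

lemma serre_dl_j {i j : Fin r} (h : j ≠ i) (t : ℕ) :
    ∃ γ : ℝ, dl j (D.ch i (D.p i j) (dlt [j]) t) = γ • (D.R i ^ t) (dlt []) ∧
      ((∃ s < t, D.p i j + D.p i i * s = -(D.p i j)) → γ = 0) := by
  induction t with
  | zero => exact ⟨1, by simp [ch_zero, dl_dlt_cons], by rintro ⟨s, hs, _⟩; omega⟩
  | succ t ih =>
    obtain ⟨γ, h1, h2⟩ := ih
    refine ⟨γ * (D.q ^ (-(D.p i j)) - D.q ^ (D.p i j + D.p i i * t)), ?_, ?_⟩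
    · rw [ch_succ, Fk_apply, map_sub, map_smul, D.dl_R_ne h, D.dl_L_ne h, h1, map_smul, map_smul,
        L_R_pow_one, ← Module.End.mul_apply, ← pow_succ', D.p_symm j i, smul_smul, smul_smul,
        ← sub_smul]
      congr 1; ring
    · rintro ⟨s, hs, hs'⟩
      rcases Nat.lt_succ_iff_lt_or_eq.1 hs with hlt | rfl
      · rw [h2 ⟨s, hlt, hs'⟩, MulZeroClass.zero_mul]
      · rw [hs', sub_self, MulZeroClass.mul_zero]

lemma serre_dl_other {i j c : Fin r} (hi : c ≠ i) (hj : c ≠ j) (t : ℕ) :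
    dl c (D.ch i (D.p i j) (dlt [j]) t) = 0 := by
  induction t with
  | zero => simp [ch_zero, dl_dlt_cons, hj]
  | succ t ih =>
    rw [ch_succ, Fk_apply, map_sub, map_smul, D.dl_R_ne hi, D.dl_L_ne hi, ih]; simp

lemma serre {i j : Fin r} (h : j ≠ i) : ∃ n : ℕ, ∀ t, n < t → D.ch i (D.p i j) (dlt [j]) t = 0 := by
  obtain ⟨n, hn⟩ := Int.eq_ofNat_of_zero_le (neg_nonneg.2 (D.C.offdiag i j h.symm))
  refine ⟨n, fun t ht => fn_ext_dl ?_ fun c => ?_⟩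
  · have h1 := D.ch_US i (D.p i j) (D.letter_US j) t
    refine US_zero h1 fun h2 => ?_
    have := congrFun h2 j
    simp [deg_nil] at this
    omega
  · rw [map_zero]
    by_cases hc : c = i
    · subst hc
      have := D.dl_ch c (D.letter_US j) (by simp [dl_dlt_cons, h.symm]) t
      rwa [pd_single] at this
    by_cases hj : c = j
    · subst hj
      obtain ⟨γ, h1, h2⟩ := D.serre_dl_j h t
      rw [h1, h2 ⟨n, ht, ?_⟩, zero_smul]
      rw [p_self, ← hn, p]; ring
    · exact D.serre_dl_other hc hj t

lemma serre_uniform (i : Fin r) : ∃ M : ℕ, ∀ j, j ≠ i → ∀ t, M < t →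
    D.ch i (D.p i j) (dlt [j]) t = 0 := by
  have h : ∀ j, ∃ n : ℕ, j ≠ i → ∀ t, n < t → D.ch i (D.p i j) (dlt [j]) t = 0 := by
    intro j
    by_cases h : j = i
    · exact ⟨0, fun h' => absurd h h'⟩
    · obtain ⟨n, hn⟩ := D.serre h; exact ⟨n, fun _ => hn⟩
  choose n hn using h
  exact ⟨∑ j, n j, fun j hj t ht => hn j hj t
    (lt_of_le_of_lt (Finset.single_le_sum (f := n) (fun _ _ => Nat.zero_le _) (Finset.mem_univ j)) ht)⟩

/-- `L^n U` -/
def Sn (i : Fin r) (n : ℕ) : Submodule ℝ (Fn r) := D.U.map (D.L i ^ n)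

lemma Sn_zero (i : Fin r) : D.Sn i 0 = D.U := by
  rw [Sn, pow_zero]; exact Submodule.map_id _

lemma L_Sn {i : Fin r} {n : ℕ} {u : Fn r} (hu : u ∈ D.Sn i n) : D.L i u ∈ D.Sn i (n + 1) := by
  obtain ⟨y, hy, rfl⟩ := hu
  exact ⟨y, hy, by rw [pow_succ']; rfl⟩

lemma Sn_succ_le (i : Fin r) (n : ℕ) : D.Sn i (n + 1) ≤ D.Sn i n := by
  rintro _ ⟨y, hy, rfl⟩
  exact ⟨D.L i y, D.L_U i hy, by rw [pow_succ]; rfl⟩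

lemma Sn_anti (i : Fin r) : Antitone (D.Sn i) := antitone_nat_of_succ_le (D.Sn_succ_le i)

lemma L_pow_mul (i : Fin r) (n : ℕ) (x y : Fn r) :
    D.mul ((D.L i ^ n) x) y = (D.L i ^ n) (D.mul x y) := by
  induction n with
  | zero => rfl
  | succ n ih => rw [pow_succ', Module.End.mul_apply, Module.End.mul_apply, ← ih, L_apply, L_apply,
      mul_assoc]

lemma mul_L_pow (i : Fin r) (n : ℕ) (x y : Fn r) :
    D.mul x ((D.L i ^ n) y) = D.mul ((D.R i ^ n) x) y := by
  induction n generalizing x with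
  | zero => rfl
  | succ n ih =>
    rw [pow_succ', Module.End.mul_apply, pow_succ, Module.End.mul_apply, ← ih, L_apply, R_apply,
      mul_assoc]

lemma Sn_mul {i : Fin r} {n : ℕ} {u y : Fn r} (hu : u ∈ D.Sn i n) (hy : y ∈ D.U) :
    D.mul u y ∈ D.Sn i n := by
  obtain ⟨x, hx, rfl⟩ := hu
  exact ⟨D.mul x y, D.mul_mem hx hy, (D.L_pow_mul i n x y).symm⟩

lemma R_pow_L (i : Fin r) (n : ℕ) (x : Fn r) :
    (D.R i ^ n) (D.L i x) = D.L i ((D.R i ^ n) x) := by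
  induction n with
  | zero => rfl
  | succ n ih => rw [pow_succ', Module.End.mul_apply, Module.End.mul_apply, ih, L_R]

lemma claimA {i j : Fin r} {M : ℕ}
    (hM : ∀ t, M < t → D.ch i (D.p i j) (dlt [j]) t = 0) (m : ℕ) :
    ∀ t n : ℕ, M + 1 ≤ t + m → (D.R i ^ n) (D.ch i (D.p i j) (dlt [j]) t) ∈ D.Sn i (n + t - M) := by
  induction m with
  | zero => intro t n ht; rw [hM t (by omega), map_zero]; exact zero_mem _
  | succ m ih =>
    intro t n ht
    by_cases hmt : M + 1 ≤ t + m
    · exact ih t n hmt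
    induction n with
    | zero =>
      have : 0 + t - M = 0 := by omega
      rw [this, Sn_zero, pow_zero]
      exact (D.ch_US i _ (D.letter_US j) t).1
    | succ n ihn =>
      have e : D.R i (D.ch i (D.p i j) (dlt [j]) t) = D.ch i (D.p i j) (dlt [j]) (t + 1) +
          D.q ^ (D.p i j + D.p i i * t) • D.L i (D.ch i (D.p i j) (dlt [j]) t) := by
        rw [ch_succ, Fk_apply]; abel
      rw [pow_succ, Module.End.mul_apply, e, map_add, map_smul, R_pow_L]
      refine add_mem ?_ (Submodule.smul_mem _ _ ?_)
      · have := ih (t + 1) n (by omega)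
        rwa [show n + 1 + t - M = n + (t + 1) - M by omega]
      · exact D.Sn_anti i (by omega) (D.L_Sn ihn)

lemma claimB {i : Fin r} {M : ℕ}
    (hM : ∀ j, j ≠ i → ∀ t, M < t → D.ch i (D.p i j) (dlt [j]) t = 0) (w : Word r) :
    D.psi w ∈ D.Sn i (w.count i - M * (w.length - w.count i)) := by
  induction w with
  | nil => simpa [Sn_zero] using D.psi_mem []
  | cons c w ih =>
    by_cases hc : c = i
    · subst hc
      rw [psi_cons, ← L_apply]
      refine D.Sn_anti c ?_ (D.L_Sn ih)
      have h1 : (c :: w).count c = w.count c + 1 := by simp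
      have h2 : (c :: w).length - (c :: w).count c = w.length - w.count c := by
        rw [h1, List.length_cons]; omega
      rw [h2, h1]; omega
    · obtain ⟨y, hy, hyw⟩ := ih
      have h0 := D.claimA (hM c hc) (M + 1) 0 (w.count i - M * (w.length - w.count i)) (by omega)
      have h3 := D.Sn_mul h0 hy
      rw [ch_zero, ← mul_L_pow, hyw] at h3
      rw [psi_cons]
      have h1 : (c :: w).count i = w.count i := by simp [List.count_cons, hc]
      have hl : w.count i ≤ w.length := List.count_le_length
      have h2 : (c :: w).length - (c :: w).count i = w.length - w.count i + 1 := by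
        rw [h1, List.length_cons]; omega
      rw [h2, h1, Nat.mul_add, Nat.mul_one, ← Nat.sub_sub]
      simpa using h3

lemma sum_deg (w : Word r) : ∑ j, deg w j = w.length := by
  induction w with
  | nil => simp [deg_nil]
  | cons c w ih => rw [deg_cons]; simp [Finset.sum_add_distrib, ih]

lemma nilp (i : Fin r) (ν : Fin r → ℕ) : ∃ N : ℕ, ∀ v ∈ D.US (ν + Pi.single i N),
    dl i v = 0 → v = 0 := by
  obtain ⟨M, hM⟩ := D.serre_uniform i
  refine ⟨M * (∑ j, ν j) + 1, fun v hv h => ?_⟩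
  ext w
  by_cases hw : deg w = ν + Pi.single i (M * (∑ j, ν j) + 1)
  · have h1 := D.claimB hM w
    have hcnt : w.count i = ν i + (M * (∑ j, ν j) + 1) := by
      have := congrFun hw i; simpa [deg] using this
    have hlen : w.length = ∑ j, ν j + (M * (∑ j, ν j) + 1) := by
      rw [← sum_deg, hw]; simp [Finset.sum_add_distrib]
    have h2 : 1 ≤ w.count i - M * (w.length - w.count i) := by
      have : M * (w.length - w.count i) ≤ M * (∑ j, ν j) := Nat.mul_le_mul_left _ (by omega)
      omega
    obtain ⟨y, hy, hy'⟩ := D.Sn_anti i h2 h1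
    rw [pow_one] at hy'
    rw [← D.ip_psi w hv.1, ← hy', D.ip_L i hy hv.1, h]; simp
  · exact US_zero hv hw

lemma zpow_lt {a b : ℤ} (h : a < b) : D.q ^ a < D.q ^ b := zpow_lt_zpow_right₀ D.hq h
lemma zpow_le {a b : ℤ} (h : a ≤ b) : D.q ^ a ≤ D.q ^ b := zpow_le_zpow_right₀ D.hq.le h

lemma cc_neg (i : Fin r) {k : ℤ} (hk : 0 < k) (t : ℕ) : D.cc i k (t + 1) < 0 := by
  refine Finset.sum_neg (fun s _ => ?_) (by simp)
  have h1 := D.d_pos i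
  have h2 : 0 ≤ D.p i i * s := by rw [p_self]; positivity
  have := D.zpow_lt (show -(k + D.p i i * s) < k + D.p i i * s by omega)
  linarith

lemma L0 (i : Fin r) {ν : Fin r → ℕ} {y : Fn r} (hy : y ∈ D.US ν) (h : dl i y = 0)
    (h' : dr i y = 0) (hk : 0 < D.pd i ν) : y = 0 := by
  obtain ⟨N, hN⟩ := D.nilp i ν
  have h1 := hN _ (D.ch_US i (D.pd i ν) hy N) (D.dl_ch i hy h N)
  clear hN
  induction N with
  | zero => exact h1
  | succ N ih =>
    apply ih
    have h2 := D.dr_ch i hy h' N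
    rw [h1, map_zero] at h2
    exact (smul_eq_zero.1 h2.symm).resolve_left (D.cc_neg i hk N).ne

/-- pairing the terms of `cc` -/
lemma two_cc (i : Fin r) (k : ℤ) (j : ℕ) : 2 * D.cc i k (j + 1) =
    ∑ s ∈ Finset.range (j + 1), ((D.q ^ (-(k + D.p i i * s)) - D.q ^ (k + D.p i i * s)) +
      (D.q ^ (-(k + D.p i i * ((j - s : ℕ) : ℤ))) - D.q ^ (k + D.p i i * ((j - s : ℕ) : ℤ)))) := by
  rw [Finset.sum_add_distrib, two_mul]
  congr 1
  have := Finset.sum_range_reflect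
    (fun s : ℕ => D.q ^ (-(k + D.p i i * (s : ℤ))) - D.q ^ (k + D.p i i * (s : ℤ))) (j + 1)
  simp only [Nat.add_sub_cancel] at this
  exact this.symm

lemma cc_nonneg (i : Fin r) {k : ℤ} {j : ℕ} (h : k + D.C.d i * j ≤ 0) : 0 ≤ D.cc i k (j + 1) := by
  have := D.two_cc i k j
  have h2 : 0 ≤ 2 * D.cc i k (j + 1) := by
    rw [this]
    refine Finset.sum_nonneg fun s hs => ?_
    have hs' : s ≤ j := by simpa [Nat.lt_succ_iff] using hs
    have e : (k + D.p i i * s) + (k + D.p i i * ((j - s : ℕ) : ℤ)) ≤ 0 := by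
      rw [p_self]; push_cast [hs']; nlinarith
    have h3 := D.zpow_le (show k + D.p i i * s ≤ -(k + D.p i i * ((j - s : ℕ) : ℤ)) by linarith)
    have h4 := D.zpow_le (show k + D.p i i * ((j - s : ℕ) : ℤ) ≤ -(k + D.p i i * s) by linarith)
    linarith
  linarith

lemma cc_zero (i : Fin r) {k : ℤ} {j : ℕ} (h : k + D.C.d i * j = 0) : D.cc i k (j + 1) = 0 := by
  have := D.two_cc i k j
  have h2 : 2 * D.cc i k (j + 1) = 0 := by
    rw [this]
    refine Finset.sum_eq_zero fun s hs => ?_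
    have hs' : s ≤ j := by simpa [Nat.lt_succ_iff] using hs
    have e : k + D.p i i * s = -(k + D.p i i * ((j - s : ℕ) : ℤ)) := by
      rw [p_self]; push_cast [hs']; linarith
    rw [e, neg_neg]; ring
  linarith

lemma pd_dvd (i : Fin r) (ν : Fin r → ℕ) : D.C.d i ∣ D.pd i ν :=
  Finset.dvd_sum fun j _ => by rw [p, _root_.mul_assoc]; exact dvd_mul_right _ _

end Dat


lemma words_finite (ν : Fin r → ℕ) : {w : Word r | deg w = ν}.Finite := by
  refine (List.finite_length_eq (Fin r) (∑ j, ν j)).subset fun w hw => ?_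
  show w.length = _
  rw [← Dat.sum_deg, show deg w = ν from hw]

namespace Dat

variable (D : Dat r)

def Pos (ν : Fin r → ℕ) : Prop := ∀ u ∈ D.US ν, 0 ≤ D.ip u u ∧ (D.ip u u = 0 → u = 0)

lemma nondeg {ν : Fin r → ℕ} {v : Fn r} (hv : v ∈ D.US ν) (h : ∀ y ∈ D.US ν, D.ip y v = 0) :
    v = 0 := by
  ext w
  by_cases hw : deg w = ν
  · rw [← D.ip_psi w hv.1]; exact h _ (hw ▸ D.psi_US w)
  · exact US_zero hv hw

/-- linear functionals on `US ν` are represented by elements -/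
lemma represent (ν : Fin r → ℕ) (φ : Fn r →ₗ[ℝ] ℝ) :
    ∃ x ∈ D.US ν, ∀ v ∈ D.US ν, D.ip x v = φ v := by
  classical
  set S := (words_finite ν).toFinset with hS
  have hmem : ∀ w, w ∈ S ↔ deg w = ν := by intro w; simp [hS]
  refine ⟨∑ w ∈ S, φ (dlt w) • D.psi w, ?_, ?_⟩
  · exact sum_mem fun w hw => Submodule.smul_mem _ _ ((hmem w).1 hw ▸ D.psi_US w)
  · intro v hv
    have e : v = ∑ w ∈ S, v w • dlt w := by
      ext s
      rw [Finset.sum_apply]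
      simp only [Pi.smul_apply, dlt, smul_eq_mul, mul_ite, _root_.mul_one, MulZeroClass.mul_zero]
      rw [Finset.sum_ite_eq]
      split_ifs with h
      · rfl
      · exact US_zero hv (fun h' => h ((hmem s).2 h'))
    conv_rhs => rw [e]
    simp only [map_sum, map_smul, LinearMap.sum_apply, LinearMap.smul_apply, D.ip_psi _ hv.1,
      smul_eq_mul]
    exact Finset.sum_congr rfl fun _ _ => mul_comm _ _

lemma dec (i : Fin r) {μ : Fin r → ℕ} (hP : D.Pos μ)
    (hY : ∀ x ∈ D.US (μ + Pi.single i 1), dl i x = 0 → dr i x = 0 → D.ip x x = 0 → x = 0)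
    {u : Fn r} (hu : u ∈ D.US (μ + Pi.single i 1)) :
    ∃ y z x, y ∈ D.US μ ∧ z ∈ D.US μ ∧ dl i z = 0 ∧ x ∈ D.US (μ + Pi.single i 1) ∧ dl i x = 0 ∧
      dr i x = 0 ∧ u = D.L i y + D.Fk i (D.pd i μ) z + x := by
  let W : Submodule ℝ (Fn r) := (D.US μ).map (D.L i) ⊔
    ((D.US μ ⊓ LinearMap.ker (dl i)).map (D.Fk i (D.pd i μ)) ⊔
    (D.US (μ + Pi.single i 1) ⊓ (LinearMap.ker (dl i) ⊓ LinearMap.ker (dr i))))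
  by_cases huW : u ∈ W
  · obtain ⟨_, ⟨y, hy, rfl⟩, _, h1, h2⟩ := Submodule.mem_sup.1 huW
    obtain ⟨_, ⟨z, hz, rfl⟩, x, hx, h3⟩ := Submodule.mem_sup.1 h1
    refine ⟨y, z, x, hy, hz.1, hz.2, hx.1, hx.2.1, hx.2.2, ?_⟩
    rw [← h2, ← h3, add_assoc]
  · exfalso
    obtain ⟨φ, hφu, hφW⟩ := Submodule.exists_le_ker_of_notMem huW
    obtain ⟨x, hx, hxv⟩ := D.represent (μ + Pi.single i 1) φ
    have h1 : ∀ v ∈ W, v ∈ D.US (μ + Pi.single i 1) → D.ip x v = 0 := fun v hv hv' => by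
      rw [hxv v hv']; exact hφW hv
    have hdl : dl i x = 0 := by
      refine D.nondeg (D.dl_US i hx) fun y hy => ?_
      have hL := D.L_US i hy
      rw [← D.ip_L i hy.1 hx.1, D.ip_symm hL.1 hx.1]
      exact h1 _ (Submodule.mem_sup_left ⟨y, hy, rfl⟩) hL
    have hdrU := D.dr_US i hx
    have hdr0 : dl i (dr i x) = 0 := by rw [dl_dr, hdl, map_zero]
    have hdr : dr i x = 0 := by
      refine (hP _ hdrU).2 ?_
      have hF := D.Fk_US i (D.pd i μ) hdrU
      rw [← D.ip_Fk i (D.pd i μ) hdrU.1 hx.1 hdl, D.ip_symm hF.1 hx.1]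
      exact h1 _ (Submodule.mem_sup_right (Submodule.mem_sup_left ⟨_, ⟨hdrU, hdr0⟩, rfl⟩)) hF
    have hx0 : x = 0 := hY x hx hdl hdr
      (h1 _ (Submodule.mem_sup_right (Submodule.mem_sup_right ⟨hx, hdl, hdr⟩)) hx)
    have := hxv u hu
    rw [hx0, map_zero, LinearMap.zero_apply] at this
    exact hφu this.symm

lemma chain_dec (i : Fin r) {ν : Fin r → ℕ} (hν : ν i = 0) (n : ℕ)
    (hP : ∀ m ≤ n, D.Pos (ν + Pi.single i m)) :
    ∀ z ∈ D.US (ν + Pi.single i n), dl i z = 0 → ∃ y : ℕ → Fn r,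
      (∀ t ≤ n, y t ∈ D.US (ν + Pi.single i (n - t)) ∧ dl i (y t) = 0 ∧ dr i (y t) = 0) ∧
      z = ∑ t ∈ Finset.range (n + 1), D.ch i (D.pd i (ν + Pi.single i (n - t))) (y t) t := by
  induction n with
  | zero =>
    intro z hz hz0
    refine ⟨fun _ => z, fun t ht => ?_, ?_⟩
    · refine ⟨by simpa using hz, hz0, D.dr_US_zero (ν := ν + Pi.single i 0) (by simp [hν]) hz⟩
    · simp [ch_zero]
  | succ n ih =>
    intro z hz hz0
    have hz' := hz
    rw [add_single_succ] at hz'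
    obtain ⟨y0, z', x, hy0, hz1, hz2, hx, hx1, hx2, e⟩ := D.dec i (hP n (by omega))
      (fun x hx _ _ h => ((add_single_succ ν i n ▸ hP (n + 1) le_rfl) x hx).2 h) hz'
    have hLU := D.L_US i hy0
    have hL0 : D.L i y0 = 0 := by
      have hd : dl i (D.L i y0) = 0 := by
        have : D.L i y0 = z - D.Fk i (D.pd i (ν + Pi.single i n)) z' - x := by rw [e]; abel
        rw [this, map_sub, map_sub, hz0, D.dl_Fk i hz1 hz2, hx1]; simp
      refine ((add_single_succ ν i n ▸ hP (n + 1) le_rfl) _ hLU).2 ?_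
      rw [D.ip_L i hy0.1 hLU.1, hd, map_zero]
    obtain ⟨y, hy, hyz⟩ := ih (fun m hm => hP m (by omega)) z' hz1 hz2
    refine ⟨fun t => Nat.casesOn t x y, fun t ht => ?_, ?_⟩
    · cases t with
      | zero => exact ⟨by simpa [add_single_succ] using hx, hx1, hx2⟩
      | succ t =>
        have := hy t (by omega)
        rwa [show n + 1 - (t + 1) = n - t by omega]
    · rw [Finset.sum_range_succ', e, hL0, zero_add]
      congr 1
      rw [hyz, map_sum]
      refine Finset.sum_congr rfl fun t ht => ?_
      have ht' : t ≤ n := by simpa [Nat.lt_succ_iff] using ht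
      simp only [show n + 1 - (t + 1) = n - t by omega, ch_succ]
      congr 2
      rw [← pd_add_single, add_assoc, ← Pi.single_add, Nat.sub_add_cancel ht']

/-- different chains are orthogonal -/
lemma ch_orth (i : Fin r) {μ ν : Fin r → ℕ} {y y' : Fn r} (hy : y ∈ D.US μ) (h1 : dl i y = 0)
    (h2 : dr i y = 0) (hy' : y' ∈ D.US ν) (s : ℕ) : ∀ t, s < t →
    D.ip (D.ch i (D.pd i ν) y' t) (D.ch i (D.pd i μ) y s) = 0 := by
  induction s with
  | zero =>
    intro t ht
    obtain ⟨t, rfl⟩ := Nat.exists_eq_succ_of_ne_zero ht.ne'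
    rw [ch_succ, ch_zero, D.ip_Fk i _ (D.ch_US i _ hy' t).1 hy.1 h1, h2, map_zero]
  | succ s ih =>
    intro t ht
    obtain ⟨t, rfl⟩ := Nat.exists_eq_succ_of_ne_zero (Nat.ne_zero_of_lt ht)
    rw [ch_succ D i _ y' t, D.ip_Fk i _ (D.ch_US i _ hy' t).1 (D.ch_US i _ hy (s + 1)).1
      (D.dl_ch i hy h1 _), D.dr_ch i hy h2, map_smul, ih t (by omega), smul_zero]

lemma ch_const_zero (i : Fin r) (k : ℤ) (y : Fn r) {m t : ℕ} (hmt : m ≤ t)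
    (h : D.ch i k y m = 0) : D.ch i k y t = 0 := by
  induction t, hmt using Nat.le_induction with
  | base => exact h
  | succ t _ ih => rw [ch_succ, ih, map_zero]

lemma ch_zero_arg (i : Fin r) (k : ℤ) (t : ℕ) : D.ch i k 0 t = 0 :=
  D.ch_const_zero i k 0 (Nat.zero_le t) rfl

lemma chain_sign (i : Fin r) {ν : Fin r → ℕ} {y : Fn r} (hy : y ∈ D.US ν) (h1 : dl i y = 0)
    (h2 : dr i y = 0) (t : ℕ) (hP : ∀ m ≤ t, D.Pos (ν + Pi.single i m)) :
    0 ≤ D.cc i (D.pd i ν) (t + 1) ∨ D.ch i (D.pd i ν) y t = 0 := by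
  by_cases hk : 0 < D.pd i ν
  · right; rw [D.L0 i hy h1 h2 hk, ch_zero_arg]
  obtain ⟨c, hc⟩ := D.pd_dvd i ν
  have hd := D.d_pos i
  have hc0 : c ≤ 0 := by
    by_contra h; exact hk (by rw [hc]; exact Int.mul_pos hd (by omega))
  obtain ⟨m, hm⟩ := Int.eq_ofNat_of_zero_le (neg_nonneg.2 hc0)
  have hcm : c = -(m : ℤ) := by omega
  by_cases htm : t ≤ m
  · left
    refine D.cc_nonneg i ?_
    rw [hc, hcm]
    have : (t : ℤ) ≤ m := by exact_mod_cast htm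
    nlinarith
  · right
    refine D.ch_const_zero i _ y (m := m + 1) (by omega) ?_
    have hU := D.ch_US i (D.pd i ν) hy (m + 1)
    refine (hP (m + 1) (by omega) _ hU).2 ?_
    have h := D.ip_Fk i (D.pd i ν + D.p i i * m) (D.ch_US i (D.pd i ν) hy m).1 hU.1
      (D.dl_ch i hy h1 _)
    rw [← ch_succ, D.dr_ch i hy h2, D.cc_zero i, zero_smul, map_zero] at h
    · exact h
    · rw [hc, hcm]; ring

/-- inductive step for positivity -/
lemma pos_step (i : Fin r) {ν : Fin r → ℕ} (hν : ν i = 0) (n : ℕ)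
    (hP : ∀ m ≤ n, D.Pos (ν + Pi.single i m)) (hk : 0 < D.pd i (ν + Pi.single i (n + 1))) :
    D.Pos (ν + Pi.single i (n + 1)) := by
  intro u hu
  have hu' := hu
  rw [add_single_succ] at hu'
  have hk' : 0 < D.pd i (ν + Pi.single i n + Pi.single i 1) := by rwa [← add_single_succ]
  have hYz : ∀ x ∈ D.US (ν + Pi.single i n + Pi.single i 1), dl i x = 0 → dr i x = 0 → x = 0 :=
    fun x hx h1 h2 => D.L0 i hx h1 h2 hk'
  obtain ⟨y, z, x, hy, hz, hz0, hx, hx1, hx2, e⟩ := D.dec i (hP n le_rfl)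
    (fun x hx h1 h2 _ => hYz x hx h1 h2) hu'
  rw [hYz x hx hx1 hx2, add_zero] at e
  have hL := D.L_US i hy
  have hF := D.Fk_US i (D.pd i (ν + Pi.single i n)) hz
  have hF0 := D.dl_Fk i hz hz0
  -- the `L` part
  have hdy : 0 ≤ D.ip (dl i y) (dl i y) := by
    cases n with
    | zero => rw [D.dl_US_zero (ν := ν + Pi.single i 0) (by simp [hν]) hy]; simp
    | succ n =>
      rw [add_single_succ] at hy
      exact (hP n (by omega) _ (D.dl_US i hy)).1
  have hLL : D.ip (D.L i y) (D.L i y) =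
      D.ip (dl i y) (dl i y) + D.q ^ (-(D.pd i (ν + Pi.single i n))) * D.ip y y := by
    rw [D.ip_L i hy.1 hL.1, dl_L_same, map_add, D.kt_US i hy, map_smul, smul_eq_mul,
      D.ip_symm hy.1 (D.L_U i (D.dl_mem i hy.1)), D.ip_L i (D.dl_mem i hy.1) hy.1]
  have hq : 0 < D.q ^ (-(D.pd i (ν + Pi.single i n))) := zpow_pos D.q_pos _
  have hyy := hP n le_rfl y hy
  have hLF : D.ip (D.L i y) (D.Fk i (D.pd i (ν + Pi.single i n)) z) = 0 := by
    rw [D.ip_L i hy.1 hF.1, hF0, map_zero]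
  -- the `F` part
  obtain ⟨Y, hY, hzY⟩ := D.chain_dec i hν n hP z hz hz0
  set k : ℕ → ℤ := fun t => D.pd i (ν + Pi.single i (n - t)) with hkdef
  set Z : ℕ → Fn r := fun t => D.ch i (k t) (Y t) t with hZ
  have hFZ : ∀ t ≤ n, D.Fk i (D.pd i (ν + Pi.single i n)) (Z t) = D.ch i (k t) (Y t) (t + 1) := by
    intro t ht
    rw [ch_succ, hkdef]
    simp only [← pd_add_single]
    rw [add_assoc, ← Pi.single_add, Nat.sub_add_cancel ht]
  have hZU : ∀ t ≤ n, Z t ∈ D.US (ν + Pi.single i n) := by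
    intro t ht
    have := D.ch_US i (k t) (hY t ht).1 t
    rwa [add_assoc, ← Pi.single_add, Nat.sub_add_cancel ht] at this
  have hZ0 : ∀ t ≤ n, dl i (Z t) = 0 := fun t ht => D.dl_ch i (hY t ht).1 (hY t ht).2.1 t
  have hdrF : ∀ t ≤ n, dr i (D.Fk i (D.pd i (ν + Pi.single i n)) (Z t)) =
      D.cc i (k t) (t + 1) • Z t := by
    intro t ht
    rw [hFZ t ht]; exact D.dr_ch i (hY t ht).1 (hY t ht).2.2 t
  have horth : ∀ s ≤ n, ∀ t ≤ n, s ≠ t → D.ip (Z s) (Z t) = 0 := by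
    intro s hs t ht hst
    rcases lt_or_gt_of_ne hst with h | h
    · rw [D.ip_symm (hZU s hs).1 (hZU t ht).1]
      exact D.ch_orth i (hY s hs).1 (hY s hs).2.1 (hY s hs).2.2 (hY t ht).1 s t h
    · exact D.ch_orth i (hY t ht).1 (hY t ht).2.1 (hY t ht).2.2 (hY s hs).1 t s h
  have hFF : D.ip (D.Fk i (D.pd i (ν + Pi.single i n)) z) (D.Fk i (D.pd i (ν + Pi.single i n)) z)
      = ∑ t ∈ Finset.range (n + 1), D.cc i (k t) (t + 1) * D.ip (Z t) (Z t) := by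
    rw [D.ip_Fk i _ hz.1 hF.1 hF0]
    have hdz : dr i (D.Fk i (D.pd i (ν + Pi.single i n)) z) =
        ∑ t ∈ Finset.range (n + 1), D.cc i (k t) (t + 1) • Z t := by
      conv_lhs => rw [hzY]
      rw [map_sum, map_sum]
      exact Finset.sum_congr rfl fun t ht => hdrF t (by simpa [Nat.lt_succ_iff] using ht)
    rw [hdz]
    conv_lhs => rw [hzY]
    rw [map_sum]
    refine Finset.sum_congr rfl fun t ht => ?_
    rw [map_smul, smul_eq_mul, map_sum, LinearMap.sum_apply]
    congr 1
    refine Finset.sum_eq_single t (fun s hs hst => ?_) (fun h => absurd ht h)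
    exact horth s (by simpa [Nat.lt_succ_iff] using hs) t
      (by simpa [Nat.lt_succ_iff] using ht) hst
  have hterm : ∀ t ≤ n, 0 ≤ D.cc i (k t) (t + 1) * D.ip (Z t) (Z t) := by
    intro t ht
    rcases D.chain_sign i (hY t ht).1 (hY t ht).2.1 (hY t ht).2.2 t (fun m hm => by
      rw [add_assoc, ← Pi.single_add]; exact hP _ (by omega)) with h | h
    · exact mul_nonneg h (hP n le_rfl _ (hZU t ht)).1
    · have : Z t = 0 := h
      rw [this]; simp
  have hFF0 : 0 ≤ D.ip (D.Fk i (D.pd i (ν + Pi.single i n)) z)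
      (D.Fk i (D.pd i (ν + Pi.single i n)) z) := by
    rw [hFF]
    exact Finset.sum_nonneg fun t ht => hterm t (by simpa [Nat.lt_succ_iff] using ht)
  have huu : D.ip u u = D.ip (D.L i y) (D.L i y) +
      D.ip (D.Fk i (D.pd i (ν + Pi.single i n)) z) (D.Fk i (D.pd i (ν + Pi.single i n)) z) := by
    rw [e]
    simp only [map_add, LinearMap.add_apply]
    rw [D.ip_symm hF.1 hL.1, hLF]; ring
  have hprod := mul_nonneg hq.le hyy.1
  refine ⟨by rw [huu, hLL]; linarith, fun h0 => ?_⟩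
  rw [huu, hLL] at h0
  have hy0 : y = 0 := by
    have : D.q ^ (-(D.pd i (ν + Pi.single i n))) * D.ip y y = 0 := by linarith
    exact hyy.2 ((mul_eq_zero.1 this).resolve_left hq.ne')
  have hFF1 : ∑ t ∈ Finset.range (n + 1), D.cc i (k t) (t + 1) * D.ip (Z t) (Z t) = 0 := by
    rw [← hFF]; linarith
  have hz1 : D.Fk i (D.pd i (ν + Pi.single i n)) z = 0 := by
    conv_lhs => rw [hzY]
    rw [map_sum]
    refine Finset.sum_eq_zero fun t ht => ?_
    have ht' : t ≤ n := by simpa [Nat.lt_succ_iff] using ht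
    have h1 := (Finset.sum_eq_zero_iff_of_nonneg (fun t ht => hterm t
      (by simpa [Nat.lt_succ_iff] using ht))).1 hFF1 t ht
    have h2 : dr i (D.Fk i (D.pd i (ν + Pi.single i n)) (Z t)) = 0 := by
      rw [hdrF t ht']
      rcases mul_eq_zero.1 h1 with h | h
      · rw [h, zero_smul]
      · rw [(hP n le_rfl _ (hZU t ht')).2 h, smul_zero]
    exact hYz _ (D.Fk_US i _ (hZU t ht')) (D.dl_Fk i (hZU t ht') (hZ0 t ht')) h2
  rw [e, hy0, hz1, map_zero, add_zero]

lemma exists_pos_root {ν : Fin r → ℕ} (hν : ν ≠ 0) : ∃ i, 0 < ν i ∧ 0 < D.pd i ν := by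
  have h := D.C.posdef (fun i => (ν i : ℚ)) (by
    intro h; apply hν; funext i; have := congrFun h i; simpa using this)
  have e : ∑ i, ∑ j, (ν i : ℚ) * ν j * ((D.C.d i * D.C.a i j : ℤ) : ℚ) =
      ((∑ i, (ν i : ℤ) * D.pd i ν : ℤ) : ℚ) := by
    push_cast [pd, p]
    refine Finset.sum_congr rfl fun i _ => ?_
    rw [Finset.mul_sum]
    exact Finset.sum_congr rfl fun j _ => by ring
  rw [e] at h
  have h' : 0 < ∑ i, (ν i : ℤ) * D.pd i ν := by exact_mod_cast h
  obtain ⟨i, -, hi⟩ := Finset.exists_lt_of_sum_lt (s := Finset.univ) (f := fun _ : Fin r => (0 : ℤ))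
    (g := fun i => (ν i : ℤ) * D.pd i ν) (by simpa using h')
  refine ⟨i, ?_, ?_⟩
  · rcases Nat.eq_zero_or_pos (ν i) with h | h
    · simp [h] at hi
    · exact h
  · exact pos_of_mul_pos_right hi (by positivity)

theorem pos_all (ν : Fin r → ℕ) : D.Pos ν := by
  obtain ⟨N, hN⟩ : ∃ N, ∑ j, ν j = N := ⟨_, rfl⟩
  induction N using Nat.strong_induction_on generalizing ν with
  | _ N ih =>
  by_cases h0 : ν = 0
  · subst h0
    intro u hu
    have e : u = u [] • dlt [] := by
      ext w
      by_cases hw : w = []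
      · simp [hw, dlt]
      · rw [US_zero hu]
        · simp [dlt, hw]
        · intro h
          have := sum_deg w
          rw [h] at this
          simp at this
          exact hw (List.length_eq_zero_iff.1 this.symm)
    have h1 : D.ip (dlt []) (dlt []) = 1 := by
      have := D.ip_psi [] (D.psi_mem [])
      rw [psi_nil] at this
      rw [this]; simp [dlt]
    have h2 : D.ip u u = u [] * u [] := by
      conv_lhs => rw [e]
      simp [h1]
    refine ⟨by rw [h2]; exact mul_self_nonneg _, fun h => ?_⟩
    rw [h2] at h
    rw [e, mul_self_eq_zero.1 h, zero_smul]
  · obtain ⟨i, hi, hk⟩ := D.exists_pos_root h0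
    obtain ⟨n, hn⟩ : ∃ n, ν i = n + 1 := ⟨ν i - 1, by omega⟩
    have e : ν = Function.update ν i 0 + Pi.single i (n + 1) := by
      funext j
      by_cases hj : j = i
      · subst hj; simp [hn]
      · simp [hj]
    have hs : ∑ j, Function.update ν i 0 j + (n + 1) = N := by
      rw [← hN]; conv_rhs => rw [e]
      simp [Finset.sum_add_distrib]
    rw [e]
    refine D.pos_step i (by simp) n (fun m hm => ih _ ?_ _ rfl) (by rwa [← e])
    rw [← hs]
    simp only [Pi.add_apply, Finset.sum_add_distrib]
    simp
    omega

end Dat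


lemma shuf_split_out {a b s1 s2 : Word r} (h : Shuf s1 s2 (a ++ b)) :
    ∃ a1 b1 a2 b2, s1 = a1 ++ b1 ∧ s2 = a2 ++ b2 ∧ Shuf a1 a2 a ∧ Shuf b1 b2 b := by
  induction a generalizing s1 s2 with
  | nil => exact ⟨[], s1, [], s2, rfl, rfl, .nil, h⟩
  | cons c a ih =>
    generalize hs : c :: a ++ b = s at h
    cases h with
    | nil => simp at hs
    | left d h =>
      simp only [List.cons_append, List.cons.injEq] at hs
      obtain ⟨rfl, rfl⟩ := hs
      obtain ⟨a1, b1, a2, b2, rfl, rfl, h1, h2⟩ := ih h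
      exact ⟨c :: a1, b1, a2, b2, rfl, rfl, .left c h1, h2⟩
    | right d h =>
      simp only [List.cons_append, List.cons.injEq] at hs
      obtain ⟨rfl, rfl⟩ := hs
      obtain ⟨a1, b1, a2, b2, rfl, rfl, h1, h2⟩ := ih h
      exact ⟨a1, b1, c :: a2, b2, rfl, rfl, .right c h1, h2⟩

namespace Dat

variable (D : Dat r)

lemma mul_eq_zero_of {f g : Fn r} {s : Word r}
    (h : ∀ s1 s2, Shuf s1 s2 s → f s1 ≠ 0 → g s2 ≠ 0 → False) : D.mul f g s = 0 := by
  by_contra h0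
  obtain ⟨s1, s2, h1, h2, h3⟩ := D.exists_shuf h0
  exact h s1 s2 h1 h2 h3

lemma kt_ne {c : Fin r} {g : Fn r} {s : Word r} (h : D.kt c g s ≠ 0) : g s ≠ 0 :=
  right_ne_zero_of_mul h

lemma mul_left_nil {b : Word r} : ∀ {f g : Fn r},
    (∀ b1 b2, Shuf b1 b2 b → f b1 ≠ 0 → g b2 ≠ 0 → b1 = []) → D.mul f g b = f [] * g b := by
  induction b with
  | nil => intro f g _; rfl
  | cons c b ih =>
    intro f g h
    rw [mul_cons, ih, D.mul_eq_zero_of (f := dl c f), add_zero]; rfl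
    · intro s1 s2 hs h1 h2
      exact absurd (h (c :: s1) s2 (.left c hs) h1 (D.kt_ne h2)) (by simp)
    · intro b1 b2 hs h1 h2
      exact h b1 (c :: b2) (.right c hs) h1 h2

lemma mul_right_nil {b : Word r} : ∀ {f g : Fn r},
    (∀ b1 b2, Shuf b1 b2 b → f b1 ≠ 0 → g b2 ≠ 0 → b2 = []) → D.mul f g b = f b * g [] := by
  induction b with
  | nil => intro f g _; rfl
  | cons c b ih =>
    intro f g h
    rw [mul_cons, D.mul_eq_zero_of (f := f), ih, zero_add]
    · simp [kt_apply, dl_apply]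
    · intro b1 b2 hs h1 h2
      exact h (c :: b1) b2 (.left c hs) h1 (D.kt_ne h2)
    · intro s1 s2 hs h1 h2
      exact absurd (h s1 (c :: s2) (.right c hs) h1 h2) (by simp)

/-- the form on degrees -/
def pp (μ ν : Fin r → ℕ) : ℤ := ∑ i, (μ i : ℤ) * D.pd i ν

lemma pp_zero (ν : Fin r → ℕ) : D.pp 0 ν = 0 := by simp [pp]

lemma pp_cons (c : Fin r) (a : Word r) (ν : Fin r → ℕ) :
    D.pp (deg (c :: a)) ν = D.pp (deg a) ν + D.pd c ν := by
  rw [deg_cons, pp, pp]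
  simp only [Pi.add_apply, Nat.cast_add, _root_.add_mul, Finset.sum_add_distrib]
  congr 1
  rw [Finset.sum_eq_single c]
  · simp
  · intro b _ hb; simp [hb]
  · simp

lemma mul_case1 {a b : Word r} : ∀ {f g : Fn r},
    (∀ a1 a2 b1 b2, Shuf a1 a2 a → Shuf b1 b2 b → f (a1 ++ b1) ≠ 0 → g (a2 ++ b2) ≠ 0 →
      a2 = [] ∧ b1 = []) →
    D.mul f g (a ++ b) = D.q ^ (-(D.pp (deg a) (deg b))) * (f a * g b) := by
  induction a with
  | nil =>
    intro f g h
    rw [List.nil_append, D.mul_left_nil, deg_nil, pp_zero]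
    · simp
    · intro b1 b2 hs h1 h2
      exact (h [] [] b1 b2 .nil hs h1 h2).2
  | cons c a ih =>
    intro f g h
    rw [List.cons_append, mul_cons, D.mul_eq_zero_of (f := f), ih, zero_add, kt_apply, pp_cons,
      neg_add, zpow_add₀ D.q_ne, pr_eq, dl_apply]
    · ring
    · intro a1 a2 b1 b2 ha hb h1 h2
      exact h (c :: a1) a2 b1 b2 (.left c ha) hb h1 (D.kt_ne h2)
    · intro s1 s2 hs h1 h2
      obtain ⟨a1, b1, a2, b2, rfl, rfl, h3, h4⟩ := shuf_split_out hs
      exact absurd (h a1 (c :: a2) b1 b2 (.right c h3) h4 h1 h2).1 (by simp)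

lemma mul_case2 {a b : Word r} : ∀ {f g : Fn r},
    (∀ a1 a2 b1 b2, Shuf a1 a2 a → Shuf b1 b2 b → f (a1 ++ b1) ≠ 0 → g (a2 ++ b2) ≠ 0 →
      a1 = [] ∧ b2 = []) →
    D.mul f g (a ++ b) = f b * g a := by
  induction a with
  | nil =>
    intro f g h
    rw [List.nil_append, D.mul_right_nil]
    intro b1 b2 hs h1 h2
    exact (h [] [] b1 b2 .nil hs h1 h2).2
  | cons c a ih =>
    intro f g h
    rw [List.cons_append, mul_cons, D.mul_eq_zero_of (f := dl c f), ih, add_zero, dl_apply]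
    · intro a1 a2 b1 b2 ha hb h1 h2
      exact h a1 (c :: a2) b1 b2 (.right c ha) hb h1 h2
    · intro s1 s2 hs h1 h2
      obtain ⟨a1, b1, a2, b2, rfl, rfl, h3, h4⟩ := shuf_split_out hs
      exact absurd (h (c :: a1) a2 b1 b2 (.left c h3) h4 h1 (D.kt_ne h2)).1 (by simp)

lemma mul_case {a b : Word r} (ha : a ≠ []) {f g : Fn r}
    (h : ∀ a1 a2 b1 b2, Shuf a1 a2 a → Shuf b1 b2 b → f (a1 ++ b1) ≠ 0 → g (a2 ++ b2) ≠ 0 →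
      (a2 = [] ∧ b1 = []) ∨ (a1 = [] ∧ b2 = [])) :
    D.mul f g (a ++ b) = D.q ^ (-(D.pp (deg a) (deg b))) * (f a * g b) + f b * g a := by
  obtain ⟨c, a, rfl⟩ := List.exists_cons_of_ne_nil ha
  rw [List.cons_append, mul_cons, D.mul_case1 (f := dl c f), D.mul_case2 (f := f), kt_apply,
    pp_cons, neg_add, zpow_add₀ D.q_ne, pr_eq, dl_apply, dl_apply]
  · ring
  · intro a1 a2 b1 b2 ha hb h1 h2
    rcases h a1 (c :: a2) b1 b2 (.right c ha) hb h1 h2 with h | h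
    · exact absurd h.1 (by simp)
    · exact h
  · intro a1 a2 b1 b2 ha hb h1 h2
    rcases h (c :: a1) a2 b1 b2 (.left c ha) hb h1 (D.kt_ne h2) with h | h
    · exact h
    · exact absurd h.1 (by simp)

lemma pp_pos {ν : Fin r → ℕ} (hν : ν ≠ 0) : 0 < D.pp ν ν := by
  have h := D.C.posdef (fun i => (ν i : ℚ)) (by
    intro h; apply hν; funext i; have := congrFun h i; simpa using this)
  have e : ∑ i, ∑ j, (ν i : ℚ) * ν j * ((D.C.d i * D.C.a i j : ℤ) : ℚ) =
      ((D.pp ν ν : ℤ) : ℚ) := by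
    push_cast [pp, pd, p]
    refine Finset.sum_congr rfl fun i _ => ?_
    rw [Finset.mul_sum]
    exact Finset.sum_congr rfl fun j _ => by ring
  rw [e] at h
  exact_mod_cast h

/-- pairing a product with an element whose cut coefficients are a combination of pure tensors -/
lemma ip_mul_split {γ δ : Fin r → ℕ} {z x v α β α' β' : Fn r} (hz : z ∈ D.US γ) (hx : x ∈ D.US δ)
    (hv : v ∈ D.U) (hα : α ∈ D.U) (hβ : β ∈ D.U) (hα' : α' ∈ D.U) (hβ' : β' ∈ D.U) (κ : ℝ)
    (h : ∀ a b, deg a = γ → deg b = δ → v (a ++ b) = κ * (α a * β b - α' a * β' b)) :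
    D.ip (D.mul z x) v = κ * (D.ip z α * D.ip x β - D.ip z α' * D.ip x β') := by
  refine D.US_induction (P := fun z => D.ip (D.mul z x) v =
    κ * (D.ip z α * D.ip x β - D.ip z α' * D.ip x β')) ?_ ?_ ?_ ?_ hz
  · intro a ha
    refine D.US_induction (P := fun x => D.ip (D.mul (D.psi a) x) v =
      κ * (D.ip (D.psi a) α * D.ip x β - D.ip (D.psi a) α' * D.ip x β')) ?_ ?_ ?_ ?_ hx
    · intro b hb
      rw [← psi_append, D.ip_psi _ hv, D.ip_psi _ hα, D.ip_psi _ hα', D.ip_psi _ hβ,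
        D.ip_psi _ hβ', h a b ha hb]
    · simp [mul_zero]
    · intro s t hs ht
      simp only [mul_add, map_add, LinearMap.add_apply, hs, ht]; ring
    · intro c s hs
      simp only [mul_smul, map_smul, LinearMap.smul_apply, hs, smul_eq_mul]; ring
  · simp [zero_mul]
  · intro s t hs ht
    simp only [add_mul, map_add, LinearMap.add_apply, hs, ht]; ring
  · intro c s hs
    simp only [smul_mul, map_smul, LinearMap.smul_apply, hs, smul_eq_mul]; ring

/-- elements of `US γ` supported on words smaller than `l` -/
def AA (l : Word r) (γ : Fin r → ℕ) : Submodule ℝ (Fn r) where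
  carrier := {x | x ∈ D.US γ ∧ ∀ w, x w ≠ 0 → w < l}
  add_mem' := by
    rintro a b ⟨ha, ha'⟩ ⟨hb, hb'⟩
    refine ⟨add_mem ha hb, fun w hw => ?_⟩
    by_cases h : a w = 0
    · exact hb' w (by simpa [h] using hw)
    · exact ha' w h
  zero_mem' := ⟨zero_mem _, fun w hw => absurd rfl hw⟩
  smul_mem' := by
    rintro c a ⟨ha, ha'⟩
    exact ⟨Submodule.smul_mem _ _ ha, fun w hw => ha' w (fun h => hw (by simp [h]))⟩

def CCp (l : Word r) (γ : Fin r → ℕ) (z : Fn r) : Prop := z ∈ D.US γ ∧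
  ∀ δ ε, δ + ε = γ → ε ≠ 0 → ∀ x ∈ D.US δ, ∀ y ∈ D.AA l ε, D.ip (D.mul x y) z = 0

lemma AA_drw {l : Word r} {δ ε : Fin r → ℕ} {x : Fn r} (hx : x ∈ D.AA l (δ + ε)) {b : Word r}
    (hb : deg b = ε) : drw b x ∈ D.AA l δ :=
  ⟨D.drw_US hb hx.1, fun w hw => lt_of_le_of_lt (le_append_self w b) (hx.2 _ hw)⟩

lemma CC_dlw {l : Word r} {δ ε : Fin r → ℕ} {z : Fn r} (hz : D.CCp l (δ + ε) z) {a : Word r}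
    (ha : deg a = δ) : D.CCp l ε (dlw a z) := by
  refine ⟨D.dlw_US ha hz.1, fun δ' ε' h hε x hx y hy => ?_⟩
  rw [← D.ip_psi_mul a (D.mul_mem hx.1 hy.1.1) hz.1.1, ← mul_assoc]
  exact hz.2 (δ + δ') ε' (by rw [add_assoc, h]) hε _ (D.mul_US (ha ▸ D.psi_US a) hx) y hy

lemma deg_eq_zero {w : Word r} (h : deg w = 0) : w = [] := by
  have := sum_deg w
  rw [h] at this
  simp at this
  exact List.length_eq_zero_iff.1 this.symm

lemma sum_ne_zero {ν : Fin r → ℕ} (h : ν ≠ 0) : 0 < ∑ j, ν j := by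
  rw [Nat.pos_iff_ne_zero]
  intro h0
  apply h
  funext j
  exact (Finset.sum_eq_zero_iff.1 h0) j (Finset.mem_univ j)

theorem AC_claim (l : Word r) : ∀ (N : ℕ) (γ : Fin r → ℕ), ∑ j, γ j = N → γ ≠ 0 →
    ∀ x ∈ D.AA l γ, ∀ z, D.CCp l γ z → x ≠ 0 → z ≠ 0 → False := by
  intro N
  induction N using Nat.strong_induction_on with
  | _ N ih =>
  intro γ hN hγ x hx z hz hx0 hz0
  -- no common proper cut
  have hcut : ∀ w' w'' y' y'' : Word r, z (w' ++ w'') ≠ 0 → x (y' ++ y'') ≠ 0 →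
      deg w'' = deg y' → deg y' = 0 ∨ deg w' = 0 := by
    intro w' w'' y' y'' h1 h2 h3
    by_contra hcon
    push Not at hcon
    have e1 := US_deg hz.1 h1
    have e2 := US_deg hx.1 h2
    rw [deg_append] at e1 e2
    have hs : ∑ j, deg y' j < N := by
      rw [← hN, ← e1, ← h3]
      simp only [Pi.add_apply, Finset.sum_add_distrib]
      have := sum_ne_zero hcon.2
      omega
    refine ih _ hs (deg y') rfl hcon.1 (drw y'' x) (D.AA_drw (e2 ▸ hx) rfl) (dlw w' z)
      (h3 ▸ D.CC_dlw (e1 ▸ hz) rfl) ?_ ?_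
    · intro h; exact h2 (congrFun h y')
    · intro h; exact h1 (congrFun h w'')
  have hne : ∀ a : Word r, deg a = γ → a ≠ [] := by
    rintro _ h rfl; exact hγ (by rw [← h, deg_nil])
  have hzx : ∀ a b, deg a = γ → deg b = γ → D.mul z x (a ++ b) =
      D.q ^ (-(D.pp γ γ)) * (z a * x b) + z b * x a := by
    intro a b ha hb
    rw [D.mul_case (hne a ha), ha, hb]
    intro a1 a2 b1 b2 hsa hsb h1 h2
    have e1 := US_deg hz.1 h1
    have e2 := US_deg hx.1 h2
    have e3 := hsa.deg
    have e4 := hsb.deg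
    rw [deg_append] at e1 e2
    have e5 : deg b1 = deg a2 := add_left_cancel (a := deg a1) (by rw [e1, ← e3, ha])
    rcases hcut a1 b1 a2 b2 h1 h2 e5 with h | h
    · exact .inl ⟨deg_eq_zero h, deg_eq_zero (e5.trans h)⟩
    · refine .inr ⟨deg_eq_zero h, deg_eq_zero ?_⟩
      rw [h, zero_add] at e1
      rw [← e5, e1] at e2
      exact add_left_cancel (a := γ) (by rw [e2, add_zero])
  have hxz : ∀ a b, deg a = γ → deg b = γ → D.mul x z (a ++ b) =
      D.q ^ (-(D.pp γ γ)) * (x a * z b) + x b * z a := by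
    intro a b ha hb
    rw [D.mul_case (hne a ha), ha, hb]
    intro a1 a2 b1 b2 hsa hsb h1 h2
    have e1 := US_deg hx.1 h1
    have e2 := US_deg hz.1 h2
    have e3 := hsa.deg
    have e4 := hsb.deg
    rw [deg_append] at e1 e2
    have e5 : deg b2 = deg a1 :=
      add_right_cancel (b := deg a2) (by rw [add_comm, e2, ← e3, ha])
    rcases hcut a2 b2 a1 b1 h2 h1 e5 with h | h
    · exact .inr ⟨deg_eq_zero h, deg_eq_zero (e5.trans h)⟩
    · refine .inl ⟨deg_eq_zero h, deg_eq_zero ?_⟩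
      rw [h, zero_add] at e2
      rw [← e5, e2] at e1
      exact add_left_cancel (a := γ) (by rw [e1, add_zero])
  set T := D.mul z x - D.mul x z with hT
  have hTU : T ∈ D.US (γ + γ) := sub_mem (D.mul_US hz.1 hx.1) (D.mul_US hx.1 hz.1)
  set κ := D.q ^ (-(D.pp γ γ)) - 1 with hκ
  have hκneg : κ < 0 := by
    have := D.zpow_lt (show -(D.pp γ γ) < 0 by have := D.pp_pos hγ; omega)
    rw [zpow_zero] at this
    linarith
  have hTab : ∀ a b, deg a = γ → deg b = γ → T (a ++ b) = κ * (z a * x b - x a * z b) := by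
    intro a b ha hb
    rw [hT, Pi.sub_apply, hzx a b ha hb, hxz a b ha hb, hκ]; ring
  have i1 := D.ip_mul_split hz.1 hx.1 hTU.1 hz.1.1 hx.1.1 hx.1.1 hz.1.1 κ hTab
  have i2 := D.ip_mul_split hx.1 hz.1 hTU.1 hz.1.1 hx.1.1 hx.1.1 hz.1.1 κ hTab
  have hxz0 : D.ip x z = 0 := by
    have := hz.2 0 γ (zero_add _) hγ _ D.one_US x hx
    rwa [one_mul] at this
  have hzx0 : D.ip z x = 0 := by rw [D.ip_symm hz.1.1 hx.1.1, hxz0]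
  have hTT : D.ip T T = 2 * κ * (D.ip z z * D.ip x x) := by
    have h0 : D.ip T T = D.ip (D.mul z x) T - D.ip (D.mul x z) T := by
      rw [← LinearMap.sub_apply, ← map_sub]
    rw [h0, i1, i2, hxz0, hzx0]; ring
  have hpz := D.pos_all γ z hz.1
  have hpx := D.pos_all γ x hx.1
  have hz1 : 0 < D.ip z z := lt_of_le_of_ne hpz.1 (fun h => hz0 (hpz.2 h.symm))
  have hx1 : 0 < D.ip x x := lt_of_le_of_ne hpx.1 (fun h => hx0 (hpx.2 h.symm))
  have hTp := (D.pos_all _ T hTU).1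
  rw [hTT] at hTp
  have := mul_pos hz1 hx1
  nlinarith

lemma US_finite (ν : Fin r → ℕ) : FiniteDimensional ℝ (D.US ν) := by
  have h : D.US ν ≤ Submodule.span ℝ (D.psi '' {w | deg w = ν}) := by
    intro u hu
    refine D.US_induction (P := fun u => u ∈ Submodule.span ℝ (D.psi '' {w | deg w = ν}))
      ?_ (zero_mem _) (fun _ _ => add_mem) (fun a _ => Submodule.smul_mem _ a) hu
    intro w hw; exact Submodule.subset_span ⟨w, hw, rfl⟩
  have := FiniteDimensional.span_of_finite ℝ ((words_finite ν).image D.psi)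
  exact Submodule.finiteDimensional_of_le h

lemma proj {ν : Fin r → ℕ} (A : Submodule ℝ (Fn r)) (hA : A ≤ D.US ν) (u : Fn r) :
    ∃ a ∈ A, ∀ y ∈ A, D.ip (u - a) y = 0 := by
  have := D.US_finite ν
  have hfin : FiniteDimensional ℝ A := Submodule.finiteDimensional_of_le hA
  let B : A →ₗ[ℝ] Module.Dual ℝ A := D.ip.domRestrict₁₂ A A
  have hB : ∀ a b : A, B a b = D.ip a b := fun _ _ => rfl
  have hinj : Function.Injective B := by
    rw [injective_iff_map_eq_zero]
    intro a ha
    have h1 := hB a a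
    rw [ha, LinearMap.zero_apply] at h1
    exact Subtype.ext ((D.pos_all ν a (hA a.2)).2 h1.symm)
  have hsurj : Function.Surjective B :=
    (LinearMap.injective_iff_surjective_of_finrank_eq_finrank
      (Subspace.dual_finrank_eq (K := ℝ) (V := A)).symm).1 hinj
  obtain ⟨a, ha⟩ := hsurj ((D.ip u).comp A.subtype)
  refine ⟨a, a.2, fun y hy => ?_⟩
  have h1 : D.ip a y = D.ip u y := by
    have := LinearMap.congr_fun ha ⟨y, hy⟩
    exact this
  rw [map_sub, LinearMap.sub_apply, h1, sub_self]

theorem main_real {l : Word r} (hl : ∀ u v : Word r, l = u ++ v → u ≠ [] → v ≠ [] → l < v)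
    (hl0 : l ≠ []) {u v : Fn r} (hu : u ∈ D.US (deg l)) (hul : u l ≠ 0)
    (hule : ∀ w, u w ≠ 0 → w ≤ l) (hv : v ∈ D.AA l (deg l)) : v = 0 := by
  by_contra hv0
  have hβ : deg l ≠ 0 := fun h => hl0 (deg_eq_zero h)
  obtain ⟨a, ha, hau⟩ := D.proj (D.AA l (deg l)) (fun _ h => h.1) u
  have hal : a l = 0 := by
    by_contra h; exact lt_irrefl _ (ha.2 l h)
  set z := u - a with hz
  have hzU : z ∈ D.US (deg l) := sub_mem hu ha.1
  have hzl : z l ≠ 0 := by rw [hz, Pi.sub_apply, hal, sub_zero]; exact hul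
  have hzle : ∀ w, z w ≠ 0 → w ≤ l := by
    intro w hw
    by_cases h : u w = 0
    · refine (ha.2 w fun h' => hw ?_).le
      rw [hz, Pi.sub_apply, h, h', sub_zero]
    · exact hule w h
  have hperp : ∀ y ∈ D.AA l (deg l), D.ip y z = 0 := fun y hy => by
    rw [D.ip_symm hy.1.1 hzU.1]; exact hau y hy
  refine D.AC_claim l _ (deg l) rfl hβ v hv z ⟨hzU, fun δ ε h hε x hx y hy => ?_⟩ hv0
    (fun h => hzl (congrFun h l))
  have key : ∀ x' ∈ D.AA l δ, D.mul x' y ∈ D.AA l (deg l) ∨ δ = 0 := by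
    intro x' hx'
    by_cases hδ : δ = 0
    · exact .inr hδ
    refine .inl ⟨h ▸ D.mul_US hx'.1 hy.1, fun s hs => ?_⟩
    obtain ⟨s1, s2, h1, h2, h3⟩ := D.exists_shuf hs
    have e1 := US_deg hx'.1 h2
    have e2 := US_deg hy.1 h3
    refine lyndon_shuf hl ?_ ?_ ?_ (hx'.2 _ h2).le (hy.2 _ h3).le h1
    · rintro rfl; exact hδ (by rw [← e1, deg_nil])
    · rintro rfl; exact hε (by rw [← e2, deg_nil])
    · rw [← sum_deg, ← sum_deg, ← sum_deg, e1, e2, ← h]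
      simp [Finset.sum_add_distrib]
  by_cases hδ : δ = 0
  · subst hδ
    rw [zero_add] at h
    subst h
    refine D.US_induction (ν := 0) (P := fun x => D.ip (D.mul x y) z = 0) ?_ ?_ ?_ ?_ hx
    · intro w hw; rw [deg_eq_zero hw, psi_nil, one_mul]; exact hperp y hy
    · simp [zero_mul]
    · intro s t hs ht; simp [add_mul, hs, ht]
    · intro c s hs; simp [smul_mul, hs]
  · obtain ⟨a', ha', hxa⟩ := D.proj (D.AA l δ) (fun _ h => h.1) x
    have e : x = a' + (x - a') := by abel
    rw [e, add_mul, map_add, LinearMap.add_apply,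
      hperp _ ((key a' ha').resolve_right hδ), zero_add]
    have hxU : x - a' ∈ D.US δ := sub_mem hx ha'.1
    refine D.US_induction (P := fun y => D.ip (D.mul (x - a') y) z = 0) ?_ ?_ ?_ ?_ hy.1
    · intro b hb
      rw [D.ip_mul_psi b hxU.1 hzU.1]
      refine hxa _ ⟨D.drw_US hb (h.symm ▸ hzU), fun w hw => ?_⟩
      have h1 : w ++ b ≤ l := hzle _ hw
      refine lt_of_lt_of_le (lt_of_le_of_ne (le_append_self w b) ?_) h1
      intro h2
      have : b = [] := by simpa using h2
      exact hε (by rw [← hb, this, deg_nil])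
    · simp [mul_zero]
    · intro s t hs ht; simp only [mul_add, map_add, LinearMap.add_apply, hs, ht, add_zero]
    · intro c s hs; simp only [mul_smul, map_smul, LinearMap.smul_apply, hs, smul_zero]

end Dat


/-! ### Transfer from `ℚ(q)` to `ℝ` -/

lemma exists_transc : ∃ θ : ℝ, 1 < θ ∧ Transcendental ℚ θ := by
  have h : {x : ℝ | IsAlgebraic ℚ x}.Countable := Algebraic.countable ℚ ℝ
  obtain ⟨θ, h1, h2, _⟩ := (h.dense_compl ℝ).exists_between (one_lt_two (α := ℝ))
  exact ⟨θ, h2, h1⟩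

lemma exists_hom (θ : ℝ) (h : Transcendental ℚ θ) : ∃ φ : K →+* ℝ, φ qq = θ := by
  have hinj : Function.Injective (Polynomial.aeval (R := ℚ) θ).toRingHom :=
    transcendental_iff_injective.1 h
  refine ⟨IsFractionRing.lift (A := Polynomial ℚ) hinj, ?_⟩
  have : qq = algebraMap (Polynomial ℚ) K Polynomial.X := by simp
  rw [this, IsFractionRing.lift_algebraMap]
  simp

/-- Specialization of coefficients. -/
def rho (φ : K →+* ℝ) : FA r →+ Fn r where
  toFun f := fun s => φ (f s)
  map_zero' := by ext s; simp
  map_add' f g := by ext s; simp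

lemma rho_apply (φ : K →+* ℝ) (f : FA r) (s : Word r) : rho φ f s = φ (f s) := rfl

lemma rho_smul (φ : K →+* ℝ) (c : K) (f : FA r) : rho φ (c • f) = φ c • rho φ f := by
  ext s; simp [rho_apply]

lemma rho_single (φ : K →+* ℝ) (w : Word r) : rho φ (Finsupp.single w 1) = dlt w := by
  ext s
  by_cases h : s = w
  · subst h; simp [rho_apply, dlt]
  · simp [rho_apply, dlt, h]

lemma fn_ext_dr {f g : Fn r} (h0 : f [] = g []) (h : ∀ c, dr c f = dr c g) : f = g := by
  ext s
  rcases List.eq_nil_or_concat s with rfl | ⟨t, c, rfl⟩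
  · exact h0
  · have := congrFun (h c) t
    simpa [dr_apply] using this

lemma dr_rho_map (φ : K →+* ℝ) (a c : Fin r) (f : FA r) :
    dr c (rho φ (Finsupp.mapDomain (fun u => u ++ [a]) f)) = if c = a then rho φ f else 0 := by
  have hinj : Function.Injective (fun u : Word r => u ++ [a]) := List.append_left_injective [a]
  ext s
  rw [dr_apply, rho_apply]
  by_cases h : c = a
  · subst h
    rw [if_pos rfl, rho_apply]
    exact congrArg φ (Finsupp.mapDomain_apply hinj f s)
  · rw [if_neg h, Finsupp.mapDomain_of_notMem_range]
    · simp
    · rintro ⟨t, ht⟩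
      have := (List.append_inj' ht rfl).2
      exact h (by simpa using this.symm)

lemma rho_map_nil (φ : K →+* ℝ) (a : Fin r) (f : FA r) :
    rho φ (Finsupp.mapDomain (fun u => u ++ [a]) f) [] = 0 := by
  rw [rho_apply, Finsupp.mapDomain_of_notMem_range, map_zero]
  rintro ⟨t, ht⟩
  simp at ht

lemma pairW_eq (D : Dat r) (w : Word r) (b : Fin r) : pairW D.C.p w [b] = D.pr b w.reverse := by
  have h : ∀ i, D.C.p i b = D.p b i := fun i => D.p_symm i b
  simp [pairW, Dat.pr, h, List.sum_reverse]

lemma rho_shAux (D : Dat r) (φ : K →+* ℝ) (hφ : φ qq = D.q) (w x : Word r) :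
    rho φ (shAux D.C.p w x) = D.mul (dlt w.reverse) (dlt x.reverse) := by
  induction w, x using shAux.induct with
  | case1 x => rw [shAux, rho_single]; simp [Dat.one_mul]
  | case2 w hw =>
    rw [shAux, rho_single]
    · simp [Dat.mul_one]
    · exact hw
  | case3 a w b x ih1 ih2 =>
    rw [shAux]
    apply fn_ext_dr
    · rw [map_add, rho_smul, Pi.add_apply, Pi.smul_apply, rho_map_nil, rho_map_nil, Dat.mul_nil]
      simp [dlt]
    · intro c
      rw [map_add, map_add, rho_smul, map_smul, dr_rho_map, dr_rho_map, ih1, ih2, Dat.dr_mul,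
        Dat.kt_dlt, Dat.smul_mul, List.reverse_cons (a := a), List.reverse_cons (a := b),
        dr_dlt_snoc, dr_dlt_snoc, map_zpow₀, hφ, pairW_eq, List.reverse_cons]
      congr 1
      · split_ifs
        · rfl
        · rw [Dat.zero_mul]
      · split_ifs with h
        · subst h; rfl
        · rw [Dat.mul_zero, smul_zero, smul_zero]

lemma rho_eq_sum (φ : K →+* ℝ) (f : FA r) :
    rho φ f = ∑ w ∈ f.support, φ (f w) • dlt w := by
  conv_lhs => rw [← Finsupp.sum_single f]
  rw [Finsupp.sum, map_sum]
  refine Finset.sum_congr rfl fun w _ => ?_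
  rw [← rho_single φ, ← rho_smul]
  simp

lemma rho_shuffle (D : Dat r) (φ : K →+* ℝ) (hφ : φ qq = D.q) (f g : FA r) :
    rho φ (shuffle D.C.p f g) = D.mul (rho φ f) (rho φ g) := by
  rw [← Dat.mulL_apply, rho_eq_sum φ f, rho_eq_sum φ g, shuffle, Finsupp.sum, map_sum, map_sum D.mulL,
    LinearMap.sum_apply]
  refine Finset.sum_congr rfl fun w _ => ?_
  rw [Finsupp.sum, map_sum, map_sum]
  refine Finset.sum_congr rfl fun x _ => ?_
  rw [rho_smul, rho_shAux D φ hφ, map_smul, map_smul, LinearMap.smul_apply, smul_smul,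
    Dat.mulL_apply, map_mul, List.reverse_reverse, List.reverse_reverse, mul_comm]

lemma rho_mem (D : Dat r) (φ : K →+* ℝ) (hφ : φ qq = D.q) {u : FA r} (hu : InU D.C.p u) :
    rho φ u ∈ D.U := by
  induction hu with
  | letter i => rw [rho_single, ← D.psi_singleton]; exact D.psi_mem _
  | one => rw [rho_single, ← D.psi_nil]; exact D.psi_mem _
  | add _ _ h1 h2 => rw [map_add]; exact add_mem h1 h2
  | smul c _ h => rw [rho_smul]; exact Submodule.smul_mem _ _ h
  | mul _ _ h1 h2 => rw [rho_shuffle D φ hφ]; exact D.mul_mem h1 h2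

lemma wle_iff (w x : Word r) : wle w x ↔ w ≤ x := by
  rw [le_iff_lt_or_eq]; exact Iff.rfl

lemma smallest_aux (C : CartanData r) (l g : Word r) (hl : IsGood C.p l) (hL : IsLyndon l)
    (hg : IsGood C.p g) (hd : deg g = deg l) : wle l g := by
  rw [wle_iff]
  by_contra hlt
  rw [not_le] at hlt
  obtain ⟨θ, hθ, htr⟩ := exists_transc
  obtain ⟨φ, hφ⟩ := exists_hom θ htr
  let D : Dat r := ⟨C, θ, hθ⟩
  have hφ' : φ qq = D.q := hφ
  obtain ⟨u, hu, ⟨ν, hν⟩, hul, hum⟩ := hl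
  obtain ⟨v, hv, ⟨μ, hμ⟩, hvg, hvm⟩ := hg
  have hsupp : ∀ (f : FA r) w, rho φ f w ≠ 0 → w ∈ f.support := by
    intro f w h
    rw [Finsupp.mem_support_iff]
    intro h0
    exact h (by rw [rho_apply, h0, map_zero])
  have hν' : deg l = ν := hν l (Finsupp.mem_support_iff.2 hul)
  have hμ' : deg g = μ := hμ g (Finsupp.mem_support_iff.2 hvg)
  have key := D.main_real (l := l) hL.2 hL.1 (u := rho φ u) (v := rho φ v)
    ⟨rho_mem D φ hφ' hu, fun w hw => by rw [hν', hν w (hsupp u w hw)]⟩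
    (by rw [rho_apply]; exact (map_ne_zero φ).2 hul)
    (fun w hw => (wle_iff _ _).1 (hum w (hsupp u w hw)))
    ⟨⟨rho_mem D φ hφ' hv, fun w hw => by rw [← hd, hμ', hμ w (hsupp v w hw)]⟩,
      fun w hw => lt_of_le_of_lt ((wle_iff _ _).1 (hvm w (hsupp v w hw))) hlt⟩
  have := congrFun key g
  rw [rho_apply] at this
  exact hvg ((map_eq_zero φ).1 this)

end Aux

/-- Corollary 4.7: a good Lyndon word is the lexicographically smallest good word of its
degree; in particular two good Lyndon words of the same degree coincide. -/
theorem good_lyndon_smallest_good_of_degree {r : ℕ} (hr : 1 ≤ r) (C : CartanData r) :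
    (∀ l g : Word r, IsGood C.p l → IsLyndon l → IsGood C.p g → deg g = deg l →
      wle l g) ∧
    (∀ l l' : Word r, IsGood C.p l → IsLyndon l → IsGood C.p l' → IsLyndon l' →
      deg l = deg l' → l = l') := by
  refine ⟨fun l g h1 h2 h3 h4 => smallest_aux C l g h1 h2 h3 h4, fun l l' h1 h2 h3 h4 h5 => ?_⟩
  have a := (wle_iff _ _).1 (smallest_aux C l l' h1 h2 h3 h5.symm)
  have b := (wle_iff _ _).1 (smallest_aux C l' l h3 h4 h1 h5)
  exact le_antisymm a b
end
end

section
/- In type B_r: (a) for all 1 ≤ i ≤ j ≤ r, the single word w[i,i+1,…,j] belongs to 𝒰; (b) for all 1 ≤ j < k ≤ r, the element f = (q + q^{−1}) · w[1]·(w[2,3,…,j] * w[1,2,…,k]) belongs to 𝒰 (here w[2,…,j] is the empty word when j = 1, w[1]·(−) denotes left concatenation of the letter w[1] with every word occurring in the q-shuffle product), and the lexicographically largest word occurring in f is max(f) = w[1,2,…,j,1,2,…,k]. -/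
open scoped BigOperators

noncomputable section

variable {r : ℕ}

/-- The Cartan matrix of type `B_r` (0-indexed; `α_1`, i.e. index `0`, is the short root):
`a_{ii} = 2`, `a_{12} = −2`, `a_{21} = −1`, `a_{i,i+1} = a_{i+1,i} = −1` for `i ≥ 2`,
and `a_{ij} = 0` for `|i−j| ≥ 2`. -/
def aB (r : ℕ) (i j : Fin r) : ℤ :=
  if i = j then 2
  else if (i : ℕ) = 0 ∧ (j : ℕ) = 1 then -2
  else if (i : ℕ) + 1 = (j : ℕ) ∨ (j : ℕ) + 1 = (i : ℕ) then -1
  else 0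

/-- The symmetrizers of type `B_r`: `d_1 = 1`, `d_i = 2` for `i ≥ 2` (0-indexed). -/
def dB (r : ℕ) (i : Fin r) : ℤ := if (i : ℕ) = 0 then 1 else 2

/-- The symmetric bilinear form `(α_i, α_j) = d_i a_{ij}` of type `B_r`. -/
def pB (r : ℕ) : Fin r → Fin r → ℤ := fun i j => dB r i * aB r i j

/-- The word `w[i+1, i+2, …, j+1]` (0-indexed run of consecutive letters `i, …, j`). -/
def run (r i j : ℕ) : List (Fin r) :=
  List.pmap (fun t ht => (⟨t, ht⟩ : Fin r))
    ((List.range r).filter fun t => decide (i ≤ t ∧ t ≤ j))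
    (fun t ht => List.mem_range.mp (List.mem_of_mem_filter ht))

/-- q-shuffle of two words (non-reversed). -/
def shW (p : Fin r → Fin r → ℤ) (w x : Word r) : FA r := shAux p w.reverse x.reverse

/-- right concatenation of a letter -/
def rApp (a : Fin r) : FA r →ₗ[K] FA r := Finsupp.lmapDomain K K (fun u => u ++ [a])

/-- left concatenation of a letter -/
def lApp (a : Fin r) : FA r →ₗ[K] FA r := Finsupp.lmapDomain K K (fun u => a :: u)

lemma rApp_single (a : Fin r) (w : Word r) (c : K) :
    rApp a (Finsupp.single w c) = Finsupp.single (w ++ [a]) c := by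
  simp [rApp, Finsupp.lmapDomain_apply, Finsupp.mapDomain_single]

lemma lApp_single (a : Fin r) (w : Word r) (c : K) :
    lApp a (Finsupp.single w c) = Finsupp.single (a :: w) c := by
  simp [lApp, Finsupp.lmapDomain_apply, Finsupp.mapDomain_single]

lemma rApp_lApp (a b : Fin r) (f : FA r) : rApp a (lApp b f) = lApp b (rApp a f) := by
  simp only [rApp, lApp, Finsupp.lmapDomain_apply, ← Finsupp.mapDomain_comp]
  rfl

lemma shuffle_single (p : Fin r → Fin r → ℤ) (w x : Word r) :
    shuffle p (Finsupp.single w 1) (Finsupp.single x 1) = shW p w x := by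
  simp [shuffle, shW]

lemma shW_nil_left (p : Fin r → Fin r → ℤ) (x : Word r) :
    shW p [] x = Finsupp.single x 1 := by
  simp [shW, shAux]

lemma shW_nil_right (p : Fin r → Fin r → ℤ) (x : Word r) :
    shW p x [] = Finsupp.single x 1 := by
  unfold shW
  rcases h : x.reverse with _ | ⟨a, w⟩
  · simp at h; subst h; simp [shAux]
  · simp only [List.reverse_nil, shAux]
    rw [← h, List.reverse_reverse]

lemma pairW_append_left (p : Fin r → Fin r → ℤ) (u v x : Word r) :
    pairW p (u ++ v) x = pairW p u x + pairW p v x := by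
  simp [pairW]

lemma pairW_cons_left (p : Fin r → Fin r → ℤ) (a : Fin r) (v x : Word r) :
    pairW p (a :: v) x = pairW p [a] x + pairW p v x := by
  simp [pairW]

lemma pairW_append_right (p : Fin r → Fin r → ℤ) (u v x : Word r) :
    pairW p x (u ++ v) = pairW p x u + pairW p x v := by
  simp [pairW, List.sum_map_add]

lemma pairW_reverse_left (p : Fin r → Fin r → ℤ) (u x : Word r) :
    pairW p u.reverse x = pairW p u x := by
  simp [pairW, List.sum_reverse]

lemma shW_snoc (p : Fin r → Fin r → ℤ) (w x : Word r) (a b : Fin r) :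
    shW p (w ++ [a]) (x ++ [b]) = rApp a (shW p w (x ++ [b]))
      + (qq ^ (-(pairW p (w ++ [a]) [b]))) • rApp b (shW p (w ++ [a]) x) := by
  have h : pairW p (w ++ [a]) [b] = pairW p (a :: w.reverse) [b] := by
    rw [← pairW_reverse_left]; simp
  rw [h]
  simp only [shW, List.reverse_append, List.reverse_cons, List.reverse_nil, List.nil_append,
    List.singleton_append, rApp, Finsupp.lmapDomain_apply]
  rw [shAux]

lemma qq_ne : (qq : K) ≠ 0 := RatFunc.X_ne_zero

lemma pairW_cons_right (p : Fin r → Fin r → ℤ) (a : Fin r) (v x : Word r) :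
    pairW p x (a :: v) = pairW p x [a] + pairW p x v := 
  pairW_append_right p [a] v x

lemma shW_cons_aux (p : Fin r → Fin r → ℤ) : ∀ (n : ℕ) (w x : Word r) (a b : Fin r),
    w.length + x.length = n →
    shW p (a :: w) (b :: x) = (qq ^ (-(pairW p [a] (b :: x)))) • lApp a (shW p w (b :: x))
      + lApp b (shW p (a :: w) x) := by
  intro n
  induction n with
  | zero =>
    intro w x a b h
    have hw : w = [] := List.length_eq_zero_iff.mp (by omega)
    have hx : x = [] := List.length_eq_zero_iff.mp (by omega)
    subst hw hx
    have := shW_snoc p [] [] a b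
    simp only [List.nil_append] at this
    rw [this]
    simp only [shW_nil_left, shW_nil_right, rApp_single, lApp_single]
    simp [add_comm]
  | succ n ih =>
    intro w x a b h
    rcases List.eq_nil_or_concat w with hw | ⟨w', c, hw⟩
    · subst hw
      rcases List.eq_nil_or_concat x with hx | ⟨x', d, hx⟩
      · subst hx; simp at h
      · rw [List.concat_eq_append] at hx; subst hx
        have e := shW_snoc p [] (b :: x') a d
        have i1 := ih [] x' a b (by simp at h ⊢; omega)
        have e2 := shW_snoc p [] x' a d
        simp only [List.nil_append, List.cons_append] at e e2
        rw [e, i1, e2]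
        simp only [shW_nil_left, rApp_single, lApp_single, map_add, map_smul, rApp_lApp, smul_add,
          smul_smul, ← zpow_add₀ qq_ne, List.cons_append]
        rw [show pairW p [a] (b :: (x' ++ [d])) = pairW p [a] (b :: x') + pairW p [a] [d] from
          pairW_append_right p (b :: x') [d] [a], neg_add, add_comm (-pairW p [a] (b :: x'))]
        abel
    · rw [List.concat_eq_append] at hw; subst hw
      rcases List.eq_nil_or_concat x with hx | ⟨x', d, hx⟩
      · subst hx
        have e := shW_snoc p (a :: w') [] c b
        have i1 := ih w' [] a b (by simp at h ⊢; omega)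
        have e2 := shW_snoc p w' [] c b
        simp only [List.nil_append, List.cons_append] at e e2
        rw [e, i1, e2]
        simp only [shW_nil_right, rApp_single, lApp_single, map_add, map_smul, rApp_lApp, smul_add,
          smul_smul, ← zpow_add₀ qq_ne, List.cons_append]
        rw [pairW_cons_left p a (w' ++ [c]), neg_add]
        abel
      · rw [List.concat_eq_append] at hx; subst hx
        have e := shW_snoc p (a :: w') (b :: x') c d
        have i1 := ih w' (x' ++ [d]) a b (by simp at h ⊢; omega)
        have i2 := ih (w' ++ [c]) x' a b (by simp at h ⊢; omega)
        have e1 := shW_snoc p w' (b :: x') c d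
        have e2 := shW_snoc p (a :: w') x' c d
        simp only [List.cons_append] at e e1 e2
        rw [e, i1, i2, e1, e2]
        simp only [map_add, map_smul, rApp_lApp, smul_add,
          smul_smul, ← zpow_add₀ qq_ne]
        rw [pairW_cons_left p a (w' ++ [c]), ← List.cons_append, pairW_append_right p (b :: x')]
        have : -(pairW p [a] [d] + pairW p (w' ++ [c]) [d]) + -pairW p [a] (b :: x')
          = -(pairW p [a] (b :: x') + pairW p [a] [d]) + -pairW p (w' ++ [c]) [d] := by ring
        rw [this]
        abel

lemma shW_cons (p : Fin r → Fin r → ℤ) (w x : Word r) (a b : Fin r) :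
    shW p (a :: w) (b :: x) = (qq ^ (-(pairW p [a] (b :: x)))) • lApp a (shW p w (b :: x))
      + lApp b (shW p (a :: w) x) := shW_cons_aux p _ w x a b rfl

/-- A letter orthogonal to all letters of a word commutes with it. -/
lemma shW_comm_letter (p : Fin r → Fin r → ℤ) (a : Fin r) (x : Word r)
    (h : ∀ b ∈ x, p a b = 0 ∧ p b a = 0) : shW p [a] x = shW p x [a] := by
  induction x with
  | nil => rw [shW_nil_left, shW_nil_right]
  | cons b x ih =>
    have h1 : pairW p [a] (b :: x) = 0 := by
      simp only [pairW, List.map_cons, List.map_nil, List.sum_cons, List.sum_nil, add_zero]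
      rw [(h b (by simp)).1, zero_add]
      apply List.sum_eq_zero
      intro t ht
      obtain ⟨j, hj, rfl⟩ := List.mem_map.mp ht
      exact (h j (by simp [hj])).1
    have h2 : pairW p [b] [a] = 0 := by simp [pairW, (h b (by simp)).2]
    rw [shW_cons, shW_cons, h1, h2, ih (fun c hc => h c (by simp [hc])), shW_nil_left,
      shW_nil_right]
    simp [add_comm]

/-- max word of `w * (b x)` when all letters of `w` are larger than `b`. -/
lemma shW_max (p : Fin r → Fin r → ℤ) (b : Fin r) (x : Word r) (w : Word r)
    (h : ∀ a ∈ w, b < a) :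
    IsMaxWord (shW p w (b :: x)) (w ++ b :: x) := by
  induction w with
  | nil =>
    rw [shW_nil_left]
    refine ⟨by simp, fun w hw => Or.inr ?_⟩
    simpa [Finsupp.single_apply, eq_comm] using hw
  | cons a w ih =>
    obtain ⟨i1, i2⟩ := ih (fun c hc => h c (by simp [hc]))
    have hab : b < a := h a (by simp)
    have hinj : ∀ c : Fin r, Function.Injective (fun u : Word r => c :: u) :=
      fun c u v huv => by simpa using huv
    rw [shW_cons]
    constructor
    · have z : lApp b (shW p (a :: w) x) (a :: w ++ b :: x) = 0 := by
        apply Finsupp.mapDomain_of_notMem_range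
        rintro ⟨u, hu⟩
        simp at hu
        exact hab.ne hu.1
      have z2 : lApp a (shW p w (b :: x)) (a :: w ++ b :: x) = shW p w (b :: x) (w ++ b :: x) :=
        Finsupp.mapDomain_apply (hinj a) _ (w ++ b :: x)
      rw [Finsupp.add_apply, Finsupp.smul_apply, z, z2, add_zero]
      exact smul_ne_zero (zpow_ne_zero _ qq_ne) i1
    · intro u hu
      rcases Finset.mem_union.mp (Finsupp.support_add hu) with hu | hu
      · have hu := Finsupp.support_smul hu
        obtain ⟨v, hv, rfl⟩ := Finset.mem_image.mp (Finsupp.mapDomain_support hu)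
        rcases i2 v hv with h | h
        · exact Or.inl (List.Lex.cons h)
        · exact Or.inr (by simp [h])
      · obtain ⟨v, hv, rfl⟩ := Finset.mem_image.mp (Finsupp.mapDomain_support hu)
        exact Or.inl (List.Lex.rel hab)

lemma mem_run {i j : ℕ} {t : Fin r} : t ∈ run r i j ↔ i ≤ t ∧ (t : ℕ) ≤ j := by
  simp only [run, List.mem_pmap, List.mem_filter, List.mem_range, decide_eq_true_eq]
  constructor
  · rintro ⟨a, ⟨_, h⟩, rfl⟩; exact h
  · intro h; exact ⟨t, ⟨t.2, h⟩, rfl⟩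

lemma run_map (i j : ℕ) : (run r i j).map Fin.val
    = (List.range r).filter fun t => decide (i ≤ t ∧ t ≤ j) := by
  simp [run, List.map_pmap]

lemma run_map' (i j : ℕ) (hj : j < r) : (run r i j).map Fin.val
    = List.range' i (j + 1 - i) := by
  rw [run_map]
  apply List.Perm.eq_of_pairwise' (r := (· < ·))
  · exact List.Pairwise.filter _ List.pairwise_lt_range
  · exact List.pairwise_lt_range'
  · rw [List.perm_ext_iff_of_nodup (List.Nodup.filter _ List.nodup_range) List.nodup_range']
    intro a
    simp [List.mem_range'_1]
    omega

lemma run_nil (i j : ℕ) (h : j < i) : run r i j = [] := by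
  rw [List.eq_nil_iff_forall_not_mem]
  intro a ha
  rw [mem_run] at ha
  omega

lemma run_snoc (i j : ℕ) (hj : j + 1 < r) (h : i ≤ j + 1) :
    run r i (j + 1) = run r i j ++ [⟨j + 1, hj⟩] := by
  apply List.map_injective_iff.mpr Fin.val_injective
  rw [List.map_append, run_map' _ _ hj, run_map' _ _ (by omega)]
  rw [show j + 1 + 1 - i = (j + 1 - i) + 1 by omega, List.range'_concat]
  simp; omega

lemma run_cons (i j : ℕ) (hj : j < r) (h : i ≤ j) :
    run r i j = ⟨i, by omega⟩ :: run r (i + 1) j := by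
  apply List.map_injective_iff.mpr Fin.val_injective
  rw [List.map_cons, run_map' _ _ hj, run_map' _ _ (by omega)]
  rw [show j + 1 - i = (j + 1 - (i + 1)) + 1 by omega, List.range'_succ]

lemma run_self (i : ℕ) (hj : i < r) : run r i i = [⟨i, hj⟩] := by
  rw [run_cons _ _ hj le_rfl, run_nil _ _ (by omega)]

lemma pB_far (a b : Fin r) (h : (a : ℕ) + 1 < b ∨ (b : ℕ) + 1 < a) : pB r a b = 0 := by
  have : a ≠ b := by rintro rfl; omega
  simp only [pB, aB, this, if_false]
  rw [if_neg (by omega), if_neg (by omega), mul_zero]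

lemma pB_adj (a b : Fin r) (h : (a : ℕ) + 1 = b ∨ (b : ℕ) + 1 = a) : pB r a b = -2 := by
  have : a ≠ b := by rintro rfl; omega
  simp only [pB, aB, dB, this, if_false]
  split_ifs <;> omega

lemma pB_zero (a : Fin r) (h : (a : ℕ) = 0) : pB r a a = 2 := by
  simp [pB, aB, dB, h]

lemma pB_self (a : Fin r) (h : 1 ≤ (a : ℕ)) : pB r a a = 4 := by
  have : (a : ℕ) ≠ 0 := by omega
  simp [pB, aB, dB, this]

lemma pairW_single (p : Fin r → Fin r → ℤ) (a b : Fin r) : pairW p [a] [b] = p a b := by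
  simp [pairW]

lemma pairW_far (w : Word r) (l : Fin r) (h : ∀ a ∈ w, (a : ℕ) + 1 < l ∨ (l : ℕ) + 1 < a) :
    pairW (pB r) w [l] = 0 := by
  apply List.sum_eq_zero
  intro t ht
  obtain ⟨j, hj, rfl⟩ := List.mem_map.mp ht
  simp [pB_far _ _ (h j hj)]

lemma pairW_far' (w : Word r) (l : Fin r) (h : ∀ a ∈ w, (a : ℕ) + 1 < l ∨ (l : ℕ) + 1 < a) :
    pairW (pB r) [l] w = 0 := by
  simp only [pairW, List.map_cons, List.map_nil, List.sum_cons, List.sum_nil, add_zero]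
  apply List.sum_eq_zero
  intro t ht
  obtain ⟨j, hj, rfl⟩ := List.mem_map.mp ht
  simp [pB_far _ _ (h j hj).symm]

lemma pair_next (i j : ℕ) (hj : j + 1 < r) (h : i ≤ j) :
    pairW (pB r) (run r i j) [⟨j + 1, hj⟩] = -2 := by
  rcases j with _ | j
  · obtain rfl : i = 0 := by omega
    rw [run_self _ (by omega), pairW_single, pB_adj _ _ (by simp)]
  · rw [run_snoc _ _ (by omega) h, pairW_append_left, pairW_single, pB_adj _ _ (by simp),
      pairW_far _ _ (by intro a ha; rw [mem_run] at ha; simp; omega), zero_add]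

lemma pair_last (i j : ℕ) (hj : j + 1 < r) (h : i ≤ j) :
    pairW (pB r) (run r i (j + 1)) [⟨j + 1, hj⟩] = 2 := by
  rw [run_snoc _ _ hj (by omega), pairW_append_left, pairW_single, pB_self _ (by simp),
    pair_next _ _ _ h]
  norm_num

lemma pair_inner (i j k : ℕ) (hj : j < r) (hk : k < r) (h : i < j) (hjk : j < k) :
    pairW (pB r) (run r i k) [⟨j, hj⟩] = 0 := by
  induction k, hjk using Nat.le_induction with
  | base =>
    obtain ⟨j, rfl⟩ : ∃ j', j = j' + 1 := ⟨j - 1, by omega⟩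
    rw [run_snoc _ _ (by omega) (by omega), pairW_append_left, pairW_single,
      pair_last _ _ _ (by omega), pB_adj _ _ (by simp)]
    norm_num
  | succ k hk' ih =>
    rw [run_snoc _ _ (by omega) (by omega), pairW_append_left, pairW_single, ih (by omega),
      pB_far _ _ (by simp; omega), zero_add]

lemma pair_first (j k : ℕ) (hj : j < r) (hk : k < r) (h : 1 ≤ j) (hjk : j < k) :
    pairW (pB r) (run r j k) [⟨j, hj⟩] = 2 := by
  rw [run_cons _ _ hk (by omega), run_cons _ _ hk (by omega), pairW_cons_left, pairW_cons_left _ _ (run _ _ _),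
    pairW_single, pairW_single, pB_self _ (by simpa), pB_adj _ _ (by simp), pairW_far]
  · norm_num
  · intro a ha; rw [mem_run] at ha; simp; omega

section LinAux

variable {F V : Type*} [Field F] [AddCommGroup V] [Module F V]

lemma lin1 (s t : F) (h : s * t = 1) (u l : V) :
    s • u + l = t • (s • l + u) + (s - t) • u := by
  match_scalars
  · ring
  · linear_combination -h

lemma lin2 (s t e : F) (h : s * t = 1) (z y : V) :
    (e • z + (s - t) • y) + t • y = s • (y + (t * e) • z) := by
  match_scalars
  · linear_combination (-e) * h
  · ring

lemma lin3 (s t e g : F) (a b c d : V) :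
    (e • a + (s - t) • b) + (c + ((s - t) * g) • d) =
      (1 : F) • (c + e • a) + (s - t) • (b + g • d) := by
  module

lemma lin4 (s t : F) (h : s * t = 1) (y : V) : s • s • y = y + ((s - t) * s) • y := by
  match_scalars
  linear_combination h

lemma lin5 (s t : F) (y z : V) :
    (1 : F) • ((1 : F) • y + (s - t) • z) = y + ((s - t) * 1) • z := by
  module

lemma lin6 (s t e : F) (a b : V) :
    b + (e • a + (s - t) • b) + (-1 : F) • (e • a + b) = (s - t) • b := by
  module

lemma lin7 (s t : F) (h : s * t = 1) (x v : V) :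
    (s - t) • v = (x + s • v) + (-t) • (v + s • x) := by
  match_scalars
  · ring
  · linear_combination h

end LinAux

lemma pair_zero_run (k : ℕ) (hk : k < r) (h : 1 ≤ k) :
    pairW (pB r) [⟨0, by omega⟩] (run r 0 k) = 0 := by
  rw [run_cons _ _ hk (by omega), run_cons _ _ hk (by omega), pairW_cons_right, pairW_cons_right _ _ (run _ _ _),
    pairW_single, pairW_single, pB_zero _ (by simp), pB_adj _ _ (by simp), pairW_far']
  · norm_num
  · intro a ha; rw [mem_run] at ha; simp; omega

lemma pair_zero_run1 (k : ℕ) (hk : k < r) (h : 1 ≤ k) :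
    pairW (pB r) [⟨0, by omega⟩] (run r 1 k) = -2 := by
  rw [run_cons _ _ hk (by omega), pairW_cons_right,
    pairW_single, pB_adj _ _ (by simp), pairW_far']
  · norm_num
  · intro a ha; rw [mem_run] at ha; simp; omega

/-- Correction factor in the crossing relation. -/
def eF (j : ℕ) : K := if j = 0 then qq ^ (-2 : ℤ) else 1

lemma qst : (qq : K) ^ (2 : ℤ) * qq ^ (-2 : ℤ) = 1 := by
  rw [← zpow_add₀ qq_ne]; norm_num

lemma pow_e0 (j : ℕ) (hj : j < r) :
    (qq : K) ^ (-pairW (pB r) [⟨0, by omega⟩] (run r 0 j)) = eF j := by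
  rcases j with _ | j
  · rw [run_self _ hj, pairW_single, pB_zero _ (by simp)]; simp [eF]
  · rw [pair_zero_run _ hj (by omega)]; simp [eF]

lemma pow_e1 (j m : ℕ) (hm : m + 1 < r) (hjm : j + 1 ≤ m) :
    (qq : K) ^ (-pairW (pB r) (run r 1 (m + 1)) [⟨j + 1, by omega⟩]) = eF j := by
  rcases j with _ | j
  · rw [pair_first 1 _ _ hm (by omega) (by omega)]; simp [eF]
  · rw [pair_inner _ _ _ _ hm (by omega) (by omega)]; simp [eF]

lemma pow_e2 (j : ℕ) (hj : j + 1 < r) :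
    (qq : K) ^ (-pairW (pB r) (run r 1 (j + 1)) [⟨j + 1, hj⟩]) = qq ^ (-2 : ℤ) * eF j := by
  rcases j with _ | j
  · rw [run_self _ hj, pairW_single, pB_self _ (by simp)]
    simp only [eF, if_true, ← zpow_add₀ qq_ne]
    norm_num
  · rw [pair_last _ _ _ (by omega)]; simp [eF]

/-- Crossing relation. -/
def RelC (r j k : ℕ) : Prop :=
  shW (pB r) (run r 0 j) (run r 1 k) =
    eF j • shW (pB r) (run r 1 k) (run r 0 j)
    + ((qq : K) ^ (2 : ℤ) - qq ^ (-2 : ℤ)) • shW (pB r) (run r 1 j) (run r 0 k)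

/-- Nested relation. -/
def RelN (r j k : ℕ) : Prop :=
  shW (pB r) (run r 0 k) (run r 1 j) = shW (pB r) (run r 1 j) (run r 0 k)

lemma relN_zero (k : ℕ) : RelN r 0 k := by
  rw [RelN, run_nil 1 0 (by omega), shW_nil_left, shW_nil_right]

lemma relC_zero (k : ℕ) (hk : k < r) (h : 1 ≤ k) : RelC r 0 k := by
  have hc : shW (pB r) [⟨0, by omega⟩] (run r 2 k) = shW (pB r) (run r 2 k) [⟨0, by omega⟩] := by
    apply shW_comm_letter
    intro b hb
    rw [mem_run] at hb
    exact ⟨pB_far _ _ (by simp; omega), pB_far _ _ (by simp; omega)⟩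
  have hp := pair_zero_run1 k hk h
  rw [RelC, run_nil 1 0 (by omega), shW_nil_left, run_self 0 (by omega), run_cons 0 k hk (by omega)]
  rw [zero_add]
  rw [run_cons 1 k hk h] at hp ⊢
  rw [shW_cons, shW_cons, hp, pairW_single, pB_adj _ _ (by simp), hc, shW_nil_left, shW_nil_right,
    lApp_single]
  simp only [eF, if_true, neg_neg]
  exact lin1 _ _ qst _ _

lemma relE (j : ℕ) (hj : j + 1 < r) (hC : RelC r j (j + 1)) (hN : RelN r j (j + 1)) :
    shW (pB r) (run r 0 (j + 1)) (run r 1 (j + 1)) =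
      (qq : K) ^ (2 : ℤ) • shW (pB r) (run r 1 (j + 1)) (run r 0 (j + 1)) := by
  have e1 := shW_snoc (pB r) (run r 0 j) (run r 1 j) ⟨j + 1, hj⟩ ⟨j + 1, hj⟩
  have e2 := shW_snoc (pB r) (run r 1 j) (run r 0 j) ⟨j + 1, hj⟩ ⟨j + 1, hj⟩
  rw [← run_snoc _ _ hj (by omega), ← run_snoc _ _ hj (by omega)] at e1 e2
  rw [pair_last _ _ _ (by omega)] at e1
  rw [pow_e2] at e2
  rw [RelC] at hC
  rw [RelN] at hN
  rw [e1, e2, hC, hN]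
  simp only [map_add, map_smul]
  exact lin2 _ _ _ qst _ _

lemma step (j m : ℕ) (hm : m + 1 < r) (hjm : j + 1 ≤ m) (g : K)
    (hg : (qq : K) ^ (-pairW (pB r) (run r 0 (j + 1)) [⟨m + 1, hm⟩]) = g)
    (hg' : (qq : K) ^ (-pairW (pB r) (run r 1 (j + 1)) [⟨m + 1, hm⟩]) = g)
    (hC : RelC r j (m + 1)) (hN : RelN r j (m + 1))
    (h1 : g • shW (pB r) (run r 0 (j + 1)) (run r 1 m) =
      shW (pB r) (run r 1 m) (run r 0 (j + 1)) +
      (((qq : K) ^ (2 : ℤ) - qq ^ (-2 : ℤ)) * g) • shW (pB r) (run r 1 (j + 1)) (run r 0 m))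
    (h2 : shW (pB r) (run r 0 m) (run r 1 (j + 1)) =
      g • shW (pB r) (run r 1 (j + 1)) (run r 0 m)) :
    RelC r (j + 1) (m + 1) ∧ RelN r (j + 1) (m + 1) := by
  have hj : j + 1 < r := by omega
  have e1 := shW_snoc (pB r) (run r 0 j) (run r 1 m) ⟨j + 1, hj⟩ ⟨m + 1, hm⟩
  have e2 := shW_snoc (pB r) (run r 1 m) (run r 0 j) ⟨m + 1, hm⟩ ⟨j + 1, hj⟩
  have e3 := shW_snoc (pB r) (run r 1 j) (run r 0 m) ⟨j + 1, hj⟩ ⟨m + 1, hm⟩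
  have e4 := shW_snoc (pB r) (run r 0 m) (run r 1 j) ⟨m + 1, hm⟩ ⟨j + 1, hj⟩
  rw [← run_snoc _ _ hj (by omega), ← run_snoc _ _ hm (by omega)] at e1 e2 e3 e4
  rw [hg] at e1
  rw [pow_e1 _ _ hm hjm] at e2
  rw [hg'] at e3
  rw [pair_inner _ _ _ _ hm (by omega) (by omega), neg_zero, zpow_zero, one_smul] at e4
  rw [RelC] at hC ⊢
  rw [RelN] at hN ⊢
  rw [e1, e2, e3, e4, hC, hN, h2, ← map_smul, h1]
  have : eF (j + 1) = 1 := by simp [eF]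
  rw [this]
  simp only [map_add, map_smul]
  exact ⟨lin3 _ _ _ _ _ _ _ _, add_comm _ _⟩

lemma rel_all (j : ℕ) : ∀ k, j < k → k < r → RelC r j k ∧ RelN r j k := by
  induction j with
  | zero => exact fun k h hk => ⟨relC_zero k hk h, relN_zero k⟩
  | succ j ih =>
    intro k hk
    induction k, hk using Nat.le_induction with
    | base =>
      intro hr
      obtain ⟨c1, n1⟩ := ih (j + 1) (by omega) (by omega)
      obtain ⟨c2, n2⟩ := ih (j + 2) (by omega) (by omega)
      have hE := relE j (by omega) c1 n1
      refine step j (j + 1) hr le_rfl (qq ^ (2 : ℤ)) ?_ ?_ c2 n2 ?_ hE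
      · rw [pair_next _ _ _ (by omega)]; norm_num
      · rw [pair_next _ _ _ (by omega)]; norm_num
      · rw [hE]
        exact lin4 _ _ qst _
    | succ m hm ih2 =>
      intro hr
      obtain ⟨c1, n1⟩ := ih2 (by omega)
      obtain ⟨c2, n2⟩ := ih (m + 1) (by omega) (by omega)
      refine step j m hr (by omega) 1 ?_ ?_ c2 n2 ?_ ?_
      · rw [pairW_far]; · simp
        intro a ha; rw [mem_run] at ha; simp; omega
      · rw [pairW_far]; · simp
        intro a ha; rw [mem_run] at ha; simp; omega
      · rw [RelC] at c1
        rw [c1]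
        have : eF (j + 1) = 1 := by simp [eF]
        rw [this]
        exact lin5 _ _ _ _
      · rw [RelN] at n1
        rw [n1, one_smul]

lemma shW_commutator (j k : ℕ) (hjk : j < k) (hk : k < r) :
    shW (pB r) (run r 0 j) (run r 0 k) + (-1 : K) • shW (pB r) (run r 0 k) (run r 0 j) =
      ((qq : K) ^ (2 : ℤ) - qq ^ (-2 : ℤ)) •
        lApp ⟨0, by omega⟩ (shW (pB r) (run r 1 j) (run r 0 k)) := by
  obtain ⟨c, n⟩ := rel_all j k hjk hk
  have e1 := shW_cons (pB r) (run r 1 j) (run r 1 k) ⟨0, by omega⟩ ⟨0, by omega⟩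
  have e2 := shW_cons (pB r) (run r 1 k) (run r 1 j) ⟨0, by omega⟩ ⟨0, by omega⟩
  have a1 := run_cons 0 j (r := r) (by omega) (by omega)
  have a2 := run_cons 0 k (by omega) (by omega)
  rw [zero_add] at a1 a2
  rw [← a1, ← a2] at e1 e2
  rw [pair_zero_run k hk (by omega), neg_zero, zpow_zero, one_smul] at e1
  rw [pow_e0 _ (by omega)] at e2
  rw [RelC] at c
  rw [RelN] at n
  rw [e1, e2, c, n]
  simp only [map_add, map_smul]
  exact lin6 _ _ _ _ _

lemma q_sub_ne : (qq : K) ^ (2 : ℤ) - qq ^ (-2 : ℤ) ≠ 0 := by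
  intro h
  have h4 : (qq : K) ^ 4 = 1 := by
    have h2 : (qq : K) ^ (2 : ℤ) = qq ^ (-2 : ℤ) := sub_eq_zero.mp h
    calc (qq : K) ^ 4 = qq ^ (2 : ℤ) * qq ^ (2 : ℤ) := by
          rw [← zpow_add₀ qq_ne]; norm_cast
      _ = qq ^ (2 : ℤ) * qq ^ (-2 : ℤ) := by nth_rewrite 2 [h2]; rfl
      _ = 1 := qst
  have h5 : algebraMap (Polynomial ℚ) (RatFunc ℚ) (Polynomial.X ^ 4)
      = algebraMap (Polynomial ℚ) (RatFunc ℚ) 1 := by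
    rw [map_pow, RatFunc.algebraMap_X, map_one]; exact h4
  have h6 := RatFunc.algebraMap_injective ℚ h5
  have h7 := congrArg Polynomial.natDegree h6
  simp at h7

lemma q_add_ne : (qq : K) + qq⁻¹ ≠ 0 := by
  intro h
  apply q_sub_ne
  have : (qq : K) ^ (2 : ℤ) - qq ^ (-2 : ℤ) = (qq + qq⁻¹) * (qq - qq⁻¹) := by
    rw [zpow_neg, ← inv_zpow]
    norm_cast
    ring
  rw [this, h, zero_mul]

lemma inU_run (i j : ℕ) (hij : i ≤ j) (hj : j < r) :
    InU (pB r) (Finsupp.single (run r i j) 1) := by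
  induction j, hij using Nat.le_induction with
  | base => rw [run_self _ hj]; exact InU.letter _
  | succ j hij ih =>
    have ih := ih (by omega)
    have hl := InU.letter (p := pB r) ⟨j + 1, hj⟩
    have h1 := InU.mul ih hl
    have h2 := InU.mul hl ih
    rw [shuffle_single] at h1 h2
    have h3 := InU.smul ((qq : K) ^ (2 : ℤ) - qq ^ (-2 : ℤ))⁻¹
      (InU.add h1 (InU.smul (-(qq : K) ^ (-2 : ℤ)) h2))
    -- split off the last letter
    have hj' : j < r := by omega
    obtain ⟨W, hW, hfar⟩ : ∃ W : Word r, run r i j = W ++ [⟨j, hj'⟩] ∧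
        ∀ b ∈ W, (b : ℕ) < j := by
      rcases j with _ | j
      · obtain rfl : i = 0 := by omega
        exact ⟨[], run_self 0 hj', by simp⟩
      · exact ⟨run r i j, run_snoc i j hj' hij,
          fun b hb => by rw [mem_run] at hb; omega⟩
    have hc : shW (pB r) [⟨j + 1, hj⟩] W = shW (pB r) W [⟨j + 1, hj⟩] := by
      apply shW_comm_letter
      intro b hb
      have := hfar b hb
      exact ⟨pB_far _ _ (by simp; omega), pB_far _ _ (by simp; omega)⟩
    have e1 := shW_snoc (pB r) W [] ⟨j, by omega⟩ ⟨j + 1, hj⟩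
    have e2 := shW_snoc (pB r) [] W ⟨j + 1, hj⟩ ⟨j, by omega⟩
    rw [List.nil_append, ← hW, pair_next _ _ _ hij, shW_nil_right, rApp_single] at e1
    rw [List.nil_append, ← hW, pairW_single, pB_adj _ _ (by simp), shW_nil_left, rApp_single,
      hc] at e2
    rw [run_snoc _ _ hj (by omega)]
    convert h3 using 1
    rw [e1, e2, neg_neg]
    have hne := q_sub_ne
    rw [eq_inv_smul_iff₀ hne]
    exact lin7 _ _ qst _ _

theorem typeB_aux (r : ℕ) (hr : 2 ≤ r) (j k : ℕ) (hjk : j < k) (hk : k < r) :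
    InU (pB r) ((qq + qq⁻¹) • lApp ⟨0, by omega⟩ (shW (pB r) (run r 1 j) (run r 0 k))) := by
  have h1 := inU_run (r := r) 0 j (by omega) (by omega)
  have h2 := inU_run (r := r) 0 k (by omega) (by omega)
  have h3 := InU.mul h1 h2
  have h4 := InU.mul h2 h1
  rw [shuffle_single] at h3 h4
  have h5 := InU.smul ((qq : K) ^ (2 : ℤ) - qq ^ (-2 : ℤ))⁻¹ (InU.add h3 (InU.smul (-1) h4))
  rw [shW_commutator _ _ hjk hk, inv_smul_smul₀ q_sub_ne] at h5
  exact InU.smul _ h5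

lemma isMax_aux (r : ℕ) (hr : 2 ≤ r) (j k : ℕ) (hjk : j < k) (hk : k < r) :
    IsMaxWord ((qq + qq⁻¹) • lApp ⟨0, by omega⟩ (shW (pB r) (run r 1 j) (run r 0 k)))
      (run r 0 j ++ run r 0 k) := by
  have a1 := run_cons 0 j (r := r) (by omega) (by omega)
  have a2 := run_cons 0 k (by omega) (by omega)
  rw [zero_add] at a1 a2
  have hm := shW_max (pB r) ⟨0, by omega⟩ (run r 1 k) (run r 1 j) (by
    intro a ha
    rw [mem_run] at ha
    rw [Fin.lt_def]
    exact ha.1)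
  rw [← a2] at hm
  obtain ⟨m1, m2⟩ := hm
  rw [a1]
  constructor
  · rw [Finsupp.smul_apply]
    apply smul_ne_zero q_add_ne
    rw [List.cons_append]
    have : Function.Injective (fun u : Word r => (⟨0, by omega⟩ : Fin r) :: u) :=
      fun u v huv => by simpa using huv
    have z := Finsupp.mapDomain_apply this (shW (pB r) (run r 1 j) (run r 0 k))
      (run r 1 j ++ run r 0 k)
    exact ne_of_eq_of_ne z m1
  · intro u hu
    have hu := Finsupp.support_smul hu
    obtain ⟨v, hv, rfl⟩ := Finset.mem_image.mp (Finsupp.mapDomain_support hu)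
    rcases m2 v hv with h | h
    · exact Or.inl (List.Lex.cons h)
    · exact Or.inr (by simp [h])

/-- Lemma 6.1 for type `B_r`: (a) each word `w[i, i+1, …, j]` (`1 ≤ i ≤ j ≤ r`) lies in
`𝒰`; (b) for `1 ≤ j < k ≤ r`, `f = (q+q^{-1}) · w[1]·(w[2,…,j] * w[1,…,k])` lies in `𝒰`
and its maximal word is `w[1,…,j,1,…,k]`. -/
theorem typeB_root_vectors (r : ℕ) (hr : 2 ≤ r) :
    (∀ i j : ℕ, 1 ≤ i → i ≤ j → j ≤ r →
      InU (pB r) (Finsupp.single (run r (i - 1) (j - 1)) 1)) ∧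
    (∀ j k : ℕ, 1 ≤ j → j < k → k ≤ r →
      InU (pB r)
        ((qq + qq⁻¹) •
          Finsupp.mapDomain (fun u : Word r => (⟨0, by omega⟩ : Fin r) :: u)
            (shuffle (pB r) (Finsupp.single (run r 1 (j - 1)) 1)
              (Finsupp.single (run r 0 (k - 1)) 1))) ∧
      IsMaxWord
        ((qq + qq⁻¹) •
          Finsupp.mapDomain (fun u : Word r => (⟨0, by omega⟩ : Fin r) :: u)
            (shuffle (pB r) (Finsupp.single (run r 1 (j - 1)) 1)
              (Finsupp.single (run r 0 (k - 1)) 1)))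
        (run r 0 (j - 1) ++ run r 0 (k - 1))) := by
  constructor
  · intro i j hi hij hj
    exact inU_run _ _ (by omega) (by omega)
  · intro j k hj hjk hk
    rw [shuffle_single]
    exact ⟨typeB_aux r hr (j - 1) (k - 1) (by omega) (by omega),
      isMax_aux r hr (j - 1) (k - 1) (by omega) (by omega)⟩
end
end
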